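/- arXiv:1307.0554 — 4 statements merged into one kernel-verified Lean document; each statement's English description precedes it below -/
import Mathlib

section
/- Open KKM Lemma: Let Δₙ ⊆ ℝⁿ denote the standard simplex with vertices the standard basis vectors e₁, …, eₙ, and let F₁, …, Fₙ be subsets of Δₙ that are open in the subspace topology of Δₙ. Suppose that for every nonempty set of indices 1 ≤ i₁ < i₂ < ⋯ < i_p ≤ n, the face S(e_{i₁}, …, e_{i_p}) of Δₙ is contained in F_{i₁} ∪ ⋯ ∪ F_{i_p}. Then F₁ ∩ F₂ ∩ ⋯ ∩ Fₙ is nonempty. -/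
/-!
Suppose the `F k` have no common point, and colour each point `x` of the simplex by some `k` with
`x ∉ F k`. By the face condition, the sets `{x | x k ≠ 0} ∩ F k` form an open cover of the simplex;
let `δ` be a Lebesgue number of it. A ball of radius `δ` then has some `k` such that it contains no
point of colour `k` and does not meet the hyperplane `x k = 0`. This contradicts a lemma of Sperner
type: some arbitrarily small ball contains, for each `k`, a point of colour `k` or a point with
`x k = 0`.

The Sperner-type lemma needs no triangulation. Order the points of a finite net of the simplex by
each of their coordinates. Scarf's theorem gives a set `P` of net points such that no net point lies
strictly above the minimum of `P` in every coordinate whose index is a colour of `P`. Let `m` be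
this minimum, with the coordinates whose index is not a colour of `P` replaced by `0`. As no net
point is strictly above `m`, the sum of `m` is almost `1`, so all points of `P` are close to `m`.

Scarf's theorem is a parity argument. Add a slack point for each colour `i`, lowest in the order `i`
and highest in the others, and break ties. Fix a colour `b` and count pairs of a room `P` (a
dominant set with as many points as there are colours) and `x ∈ P` such that `P.erase x` has all the
colours but `b`. A room has zero or two such `x` unless it has all the colours. A set `Q` extends to
zero or two rooms, except the set of slack points other than that of `b`, which extends to one.
Hence some room has all the colours.
-/

namespace Scarf

open Finset

section Combinatorics

variable {X Y : Type*} [DecidableEq X] [DecidableEq Y]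

lemma card_filter_image_erase_eq_two {s : Finset X} {t : Finset Y} {f : X → Y}
    (hf : s.image f = t) (hcard : #s = #t + 1) :
    #{x ∈ s | (s.erase x).image f = t} = 2 := by
  obtain ⟨x, hx, y, hy, hxy, hfxy⟩ := exists_ne_map_eq_of_card_lt_of_maps_to
    (by omega : #t < #s) (fun z hz ↦ hf ▸ mem_image_of_mem f hz : ∀ z ∈ s, f z ∈ t)
  have image_erase {a b : X} (hb : b ∈ s) (hab : a ≠ b) (hfab : f a = f b) :
      (s.erase a).image f = t := by
    rw [← hf, ← insert_erase (mem_of_mem_erase (mem_erase.2 ⟨hab.symm, hb⟩))]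
    grind
  have mem_pair {z : X} (hz : z ∈ s) (hfz : (s.erase z).image f = t) : z = x ∨ z = y := by
    have hinj : Set.InjOn f (s.erase z) := by
      rw [← card_image_iff, hfz, card_erase_of_mem hz]
      omega
    by_contra! hne
    exact hxy (hinj (by simp [hx, hne.1.symm]) (by simp [hy, hne.2.symm]) hfxy)
  rw [card_eq_two]
  refine ⟨x, y, hxy, ?_⟩
  ext z
  simp only [mem_filter, mem_insert, mem_singleton]
  constructor
  · rintro ⟨hz, hfz⟩
    exact mem_pair hz hfz
  · rintro (rfl | rfl)
    · exact ⟨hx, image_erase hy hxy hfxy⟩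
    · exact ⟨hy, image_erase hx hxy.symm hfxy.symm⟩

lemma even_card_filter_image_erase [Fintype Y] {s : Finset X} {f : X → Y} (b : Y)
    (hf : s.image f ≠ univ) (hcard : #s = Fintype.card Y) :
    Even #{x ∈ s | (s.erase x).image f = univ.erase b} := by
  obtain h | ⟨x, hx⟩ := eq_empty_or_nonempty {x ∈ s | (s.erase x).image f = univ.erase b}
  · simp [h]
  obtain ⟨hxs, hx⟩ := mem_filter.1 hx
  have himage : s.image f = insert (f x) (univ.erase b) := by
    rw [← hx, ← image_insert, insert_erase hxs]
  have hfx : f x ≠ b := fun h ↦ hf (by rw [himage, h, insert_erase (mem_univ b)])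
  rw [insert_eq_of_mem (mem_erase.2 ⟨hfx, mem_univ _⟩)] at himage
  rw [card_filter_image_erase_eq_two himage]
  · exact even_two
  · rw [hcard, card_erase_add_one (mem_univ b), card_univ]

lemma sum_card_filter_erase_eq_sum_card_filter_insert [Fintype X] (p q : Finset X → Prop)
    [DecidablePred p] [DecidablePred q] :
    ∑ P with p P, #{x ∈ P | q (P.erase x)} = ∑ Q with q Q, #{x | x ∉ Q ∧ p (insert x Q)} := by
  rw [← card_sigma, ← card_sigma]
  refine card_nbij' (fun a ↦ ⟨a.1.erase a.2, a.2⟩) (fun a ↦ ⟨insert a.2 a.1, a.2⟩) ?_ ?_ ?_ ?_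
  · rintro ⟨P, x⟩ h
    simp_all [insert_erase]
  · rintro ⟨Q, x⟩ h
    simp_all
  · rintro ⟨P, x⟩ h
    simp_all [insert_erase]
  · rintro ⟨Q, x⟩ h
    simp_all

end Combinatorics

section Dominant

variable {I Y α : Type*} [LinearOrder α] {r : I → Y → α} {m : I → Y} {P Q : Finset Y}

/-- Scarf's dominant sets, for the preorders on `Y` given by the ranks `r i`: no point is, in every
order, above the minimum of `P`. -/
def Dominant (r : I → Y → α) (P : Finset Y) : Prop :=
  ∀ y, ∃ i, ∀ x ∈ P, r i y ≤ r i x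

/-- `m i` is a lowest point of `P` in the order `i`, for every `i`. -/
def IsArgmin (r : I → Y → α) (P : Finset Y) (m : I → Y) : Prop :=
  ∀ i, m i ∈ P ∧ ∀ x ∈ P, r i (m i) ≤ r i x

/-- The points above `m i` in every order `i` but `k`. With `m` the minima of a dominant set `Q`,
these are the candidates for a point which enters `Q` as its new minimum in the order `k`. -/
def aboveExcept (r : I → Y → α) (m : I → Y) (k : I) : Set Y :=
  {x | ∀ i ≠ k, r i (m i) < r i x}

lemma Dominant.mono (hP : Dominant r P) (hQP : Q ⊆ P) : Dominant r Q := fun y ↦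
  (hP y).imp fun _ hi x hx ↦ hi x (hQP hx)

lemma exists_isArgmin (r : I → Y → α) (hP : P.Nonempty) : ∃ m, IsArgmin r P m := by
  choose m hm using fun i ↦ exists_min_image P (r i) hP
  exact ⟨m, hm⟩

lemma Dominant.exists_le_argmin (hP : Dominant r P) (hm : IsArgmin r P m) (y : Y) :
    ∃ i, r i y ≤ r i (m i) :=
  (hP y).imp fun i hi ↦ hi _ (hm i).1

lemma Dominant.le_of_mem_aboveExcept (hP : Dominant r P) (hm : ∀ i, m i ∈ P) {k : I} {y : Y}
    (hy : y ∈ aboveExcept r m k) : ∀ x ∈ P, r k y ≤ r k x := by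
  obtain ⟨i, hi⟩ := hP y
  obtain rfl | hik := eq_or_ne i k
  · exact hi
  · exact absurd (hi _ (hm i)) (hy i hik).not_ge

lemma Dominant.eq_of_mem_aboveExcept (hP : Dominant r P) (hm : IsArgmin r P m) {k l : I} {x : Y}
    (hk : x ∈ aboveExcept r m k) (hl : x ∈ aboveExcept r m l) : k = l := by
  obtain ⟨i, hi⟩ := hP.exists_le_argmin hm x
  have eq_of_mem {k : I} (hk : x ∈ aboveExcept r m k) : i = k := by
    by_contra hik
    exact hi.not_gt (hk i hik)
  exact (eq_of_mem hk).symm.trans (eq_of_mem hl)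

lemma Dominant.insert_of_isMaxOn [DecidableEq Y] (hQ : Dominant r Q) (hm : IsArgmin r Q m) {k : I}
    {x : Y} (hx : x ∈ aboveExcept r m k) (hmax : IsMaxOn (r k) (aboveExcept r m k) x) :
    Dominant r (insert x Q) := by
  intro y
  by_cases hy : y ∈ aboveExcept r m k
  · exact ⟨k, (forall_mem_insert _ _ _).2
      ⟨hmax hy, hQ.le_of_mem_aboveExcept (fun i ↦ (hm i).1) hy⟩⟩
  · simp only [aboveExcept, Set.mem_ofPred_eq, not_forall, not_lt] at hy
    obtain ⟨i, hik, hyi⟩ := hy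
    exact ⟨i, (forall_mem_insert _ _ _).2
      ⟨hyi.trans (hx i hik).le, fun z hz ↦ hyi.trans ((hm i).2 z hz)⟩⟩

variable [Fintype I] [DecidableEq Y]

lemma Dominant.image_argmin (hr : ∀ i, Function.Injective (r i)) (hP : Dominant r P)
    (hm : IsArgmin r P m) : univ.image m = P := by
  refine Subset.antisymm (image_subset_iff.2 fun i _ ↦ (hm i).1) fun x hx ↦ ?_
  obtain ⟨i, hi⟩ := hP x
  exact mem_image.2 ⟨i, mem_univ i, hr i (((hm i).2 x hx).antisymm (hi _ (hm i).1))⟩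

/-- The top-dimensional simplices of Scarf's complex. -/
def IsRoom (r : I → Y → α) (P : Finset Y) : Prop :=
  #P = Fintype.card I ∧ Dominant r P

lemma IsRoom.exists_isMaxOn [DecidableEq I] (hr : ∀ i, Function.Injective (r i))
    (hm : IsArgmin r Q m) {x : Y} (hxQ : x ∉ Q) (hroom : IsRoom r (insert x Q)) :
    ∃ k, (univ.erase k).image m = Q ∧ x ∈ aboveExcept r m k ∧
      IsMaxOn (r k) (aboveExcept r m k) x := by
  obtain ⟨hcard, hdom⟩ := hroom
  obtain ⟨m', hm'⟩ := exists_isArgmin r (insert_nonempty x Q)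
  have himage := hdom.image_argmin hr hm'
  have hinj : Function.Injective m' := by
    rw [← Set.injOn_univ, ← coe_univ, ← card_image_iff, himage, hcard, card_univ]
  obtain ⟨k, -, hk⟩ := mem_image.1 (himage ▸ mem_insert_self x Q)
  have hmm' : ∀ i ≠ k, m' i = m i := fun i hi ↦ by
    have hQ : m' i ∈ Q := mem_of_mem_insert_of_ne (hm' i).1 fun h ↦ hi (hinj (h.trans hk.symm))
    exact hr i (((hm' i).2 _ (mem_insert_of_mem (hm i).1)).antisymm ((hm i).2 _ hQ))
  refine ⟨k, ?_, fun i hi ↦ ?_, fun y hy ↦ ?_⟩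
  · calc (univ.erase k).image m = (univ.erase k).image m' :=
          image_congr fun i hi ↦ (hmm' i (ne_of_mem_erase hi)).symm
      _ = Q := by rw [image_erase hinj, himage, hk, erase_insert hxQ]
  · refine lt_of_le_of_ne (hmm' i hi ▸ (hm' i).2 x (mem_insert_self x Q)) fun h ↦ hxQ ?_
    exact hr i h ▸ (hm i).1
  · exact hdom.le_of_mem_aboveExcept (fun i ↦ mem_insert_of_mem (hm i).1) hy x
      (mem_insert_self x Q)

lemma Dominant.card_filter_isRoom_insert_eq_two [Fintype Y] [DecidablePred (IsRoom r)]
    (hr : ∀ i, Function.Injective (r i)) (hQ : Dominant r Q) (hcard : Fintype.card I = #Q + 1)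
    (hm : IsArgmin r Q m) (hne : ∀ k, (aboveExcept r m k).Nonempty) :
    #{x | x ∉ Q ∧ IsRoom r (insert x Q)} = 2 := by
  classical
  choose top htop hmax using fun k ↦
    Set.exists_max_image (aboveExcept r m k) (r k) (Set.toFinite _) (hne k)
  have htop_notMem {k : I} (hk : (univ.erase k).image m = Q) : top k ∉ Q := fun h ↦ by
    rw [← hk, mem_image] at h
    obtain ⟨i, hi, hik⟩ := h
    exact (htop k i (ne_of_mem_erase hi)).ne (congrArg (r i) hik)
  have himage : ({x | x ∉ Q ∧ IsRoom r (insert x Q)} : Finset Y) =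
      ({k | (univ.erase k).image m = Q} : Finset I).image top := by
    ext x
    simp only [mem_filter, mem_univ, true_and, mem_image]
    constructor
    · rintro ⟨hxQ, hroom⟩
      obtain ⟨k, hk, hx, hxmax⟩ := hroom.exists_isMaxOn hr hm hxQ
      exact ⟨k, hk, hr k ((hxmax (htop k)).antisymm (hmax k x hx))⟩
    · rintro ⟨k, hk, rfl⟩
      refine ⟨htop_notMem hk, ?_, hQ.insert_of_isMaxOn hm (htop k) (hmax k)⟩
      rw [card_insert_of_notMem (htop_notMem hk), hcard]
  have htop_inj : Function.Injective top := fun k l hkl ↦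
    hQ.eq_of_mem_aboveExcept hm (htop k) (hkl ▸ htop l)
  rw [himage, card_image_of_injective _ htop_inj]
  exact card_filter_image_erase_eq_two (hQ.image_argmin hr hm) hcard

end Dominant

section Slack

variable {I Y α : Type*} [LinearOrder α] {r : I → Y → α} {s : I → Y}

/-- A family of slack points `s`, playing the role of the vertices of a large simplex around the
other points: `s i` is lowest in the order `i`, and above all non-slack points in the others. -/
structure IsSlack (r : I → Y → α) (s : I → Y) : Prop where
  le : ∀ i y, r i (s i) ≤ r i y
  lt : ∀ {i j : I}, j ≠ i → ∀ {y : Y}, y ∉ Set.range s → r i y < r i (s j)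

variable [Fintype I]

lemma IsSlack.even_card_filter_isRoom_insert [DecidableEq Y] [Fintype Y] [DecidablePred (IsRoom r)]
    (hs : IsSlack r s) (hr : ∀ i, Function.Injective (r i)) {Q : Finset Y} {q : Y} (hq : q ∈ Q)
    (hqs : q ∉ Set.range s) : Even #{x | x ∉ Q ∧ IsRoom r (insert x Q)} := by
  obtain h | ⟨x, hx⟩ := eq_empty_or_nonempty ({x | x ∉ Q ∧ IsRoom r (insert x Q)} : Finset Y)
  · simp [h]
  obtain ⟨-, hxQ, hcard, hdom⟩ := mem_filter.1 hx
  rw [card_insert_of_notMem hxQ] at hcard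
  obtain ⟨m, hm⟩ := exists_isArgmin r ⟨q, hq⟩
  have hne : ∀ k, (aboveExcept r m k).Nonempty := fun k ↦
    ⟨s k, fun i hi ↦ ((hm i).2 q hq).trans_lt (hs.lt hi.symm hqs)⟩
  rw [(hdom.mono (subset_insert x Q)).card_filter_isRoom_insert_eq_two hr hcard.symm hm hne]
  exact even_two

variable [DecidableEq I]

lemma IsSlack.dominant_insert_image_erase_iff [DecidableEq Y] (hs : IsSlack r s)
    (hr : ∀ i, Function.Injective (r i)) (hne : ∃ y, y ∉ Set.range s) {k : I} {x : Y}
    (hx : x ∉ (univ.erase k).image s) :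
    Dominant r (insert x ((univ.erase k).image s)) ↔
      x ∉ Set.range s ∧ ∀ y ∉ Set.range s, r k y ≤ r k x := by
  have hmem {i : I} (hi : i ≠ k) : s i ∈ (univ.erase k).image s :=
    mem_image_of_mem s (mem_erase.2 ⟨hi, mem_univ i⟩)
  have not_le {i : I} {y : Y} (hy : y ∉ Set.range s) : ¬ r i y ≤ r i (s i) := fun h ↦
    hy ⟨i, hr i ((hs.le i y).antisymm h)⟩
  constructor
  · intro hdom
    have hmax : ∀ y ∉ Set.range s, r k y ≤ r k x := fun y hy ↦ by
      obtain ⟨i, hi⟩ := hdom y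
      obtain rfl | hik := eq_or_ne i k
      · exact hi x (mem_insert_self _ _)
      · exact absurd (hi _ (mem_insert_of_mem (hmem hik))) (not_le hy)
    refine ⟨?_, hmax⟩
    rintro ⟨i, rfl⟩
    obtain rfl : i = k := by
      by_contra hik
      exact hx (hmem hik)
    obtain ⟨y, hy⟩ := hne
    exact not_le hy (hmax y hy)
  · rintro ⟨-, hmax⟩ y
    by_cases hy : y ∈ Set.range s
    · obtain ⟨i, rfl⟩ := hy
      exact ⟨i, fun z _ ↦ hs.le i z⟩
    · refine ⟨k, (forall_mem_insert _ _ _).2 ⟨hmax y hy, forall_mem_image.2 fun i hi ↦ ?_⟩⟩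
      exact (hs.lt (ne_of_mem_erase hi) hy).le

lemma IsSlack.card_filter_isRoom_insert_eq_one [DecidableEq Y] [Fintype Y]
    [DecidablePred (IsRoom r)] (hs : IsSlack r s) (hr : ∀ i, Function.Injective (r i))
    (hne : ∃ y, y ∉ Set.range s) (k : I) :
    #{x | x ∉ (univ.erase k).image s ∧ IsRoom r (insert x ((univ.erase k).image s))} = 1 := by
  obtain ⟨a, ha, hmax⟩ := Set.exists_max_image (Set.range s)ᶜ (r k) (Set.toFinite _) hne
  have notMem_image {x : Y} (hx : x ∉ Set.range s) : x ∉ (univ.erase k).image s := fun h ↦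
    hx (by obtain ⟨i, -, hi⟩ := mem_image.1 h; exact ⟨i, hi⟩)
  have hs_inj : Function.Injective s := fun i j hij ↦ by
    by_contra hne'
    exact ((hs.le i a).trans_lt (hs.lt (Ne.symm hne') ha)).ne (congrArg (r i) hij)
  refine card_eq_one.2 ⟨a, ?_⟩
  ext x
  simp only [mem_filter, mem_univ, true_and, mem_singleton]
  constructor
  · rintro ⟨hx, -, hdom⟩
    obtain ⟨hxs, hxmax⟩ := (hs.dominant_insert_image_erase_iff hr hne hx).1 hdom
    exact hr k ((hmax x hxs).antisymm (hxmax a ha))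
  · rintro rfl
    refine ⟨notMem_image ha, ?_,
      (hs.dominant_insert_image_erase_iff hr hne (notMem_image ha)).2 ⟨ha, hmax⟩⟩
    rw [card_insert_of_notMem (notMem_image ha), card_image_of_injective _ hs_inj,
      card_erase_add_one (mem_univ k), card_univ]

theorem IsSlack.exists_dominant_image_eq_univ [Finite Y] (hs : IsSlack r s)
    (hr : ∀ i, Function.Injective (r i)) (hne : ∃ y, y ∉ Set.range s) {c : Y → I}
    (hc : Function.LeftInverse c s) : ∃ P, Dominant r P ∧ P.image c = univ := by
  classical
  have := Fintype.ofFinite Y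
  by_contra! hno
  obtain ⟨y, -⟩ := id hne
  let Q₀ := (univ.erase (c y)).image s
  have hQ₀ : Q₀.image c = univ.erase (c y) := by
    rw [image_image, hc.comp_eq_id, image_id]
  have exists_notMem_range {Q : Finset Y} (hQ : Q.image c = univ.erase (c y)) (hQQ₀ : Q ≠ Q₀) :
      ∃ q ∈ Q, q ∉ Set.range s := by
    by_contra! hslack
    refine hQQ₀ ?_
    have : Q.image (s ∘ c) = Q.image id := image_congr fun q hq ↦ by
      obtain ⟨i, rfl⟩ := hslack q hq
      exact congrArg s (hc i)
    rw [image_id, ← image_image, hQ] at this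
    exact this.symm
  have hcount := sum_card_filter_erase_eq_sum_card_filter_insert (IsRoom r)
    (fun Q ↦ Q.image c = univ.erase (c y))
  have heven : Even (∑ P with IsRoom r P, #{x ∈ P | (P.erase x).image c = univ.erase (c y)}) :=
    even_sum _ fun P hP ↦ by
      obtain ⟨-, hcard, hdom⟩ := mem_filter.1 hP
      exact even_card_filter_image_erase (c y) (hno P hdom) hcard
  rw [hcount, ← add_sum_erase _ _ (mem_filter.2 ⟨mem_univ Q₀, hQ₀⟩),
    hs.card_filter_isRoom_insert_eq_one hr hne] at heven
  refine Nat.not_even_one ((Nat.even_add.1 heven).2 (even_sum _ fun Q hQ ↦ ?_))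
  obtain ⟨hQQ₀, hQ⟩ := mem_erase.1 hQ
  obtain ⟨q, hq, hqs⟩ := exists_notMem_range (mem_filter.1 hQ).2 hQQ₀
  exact hs.even_card_filter_isRoom_insert hr hq hqs

end Slack

section Scarf

variable {I Y α : Type*} [LinearOrder α]

/-- The ranks `r i` extended to `Y ⊕ I`, so that the points `Sum.inr j` are at the bottom or at the
top. In the order `i`, all `Sum.inr j` with `j ≠ i` are tied. -/
def slackRank [DecidableEq I] (r : I → Y → α) (i : I) : Y ⊕ I → WithBot (WithTop α) :=
  Sum.elim (fun y ↦ ((r i y : WithTop α) : WithBot (WithTop α))) (fun j ↦ if j = i then ⊥ else ⊤)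

lemma isSlack_toLex_slackRank [DecidableEq I] {β : Type*} [LinearOrder β] (r : I → Y → α)
    (e : Y ⊕ I → β) :
    IsSlack (fun i z ↦ toLex (slackRank r i z, e z)) Sum.inr where
  le i := by
    have bot_lt {z : Y ⊕ I} (hz : z ≠ Sum.inr i) : slackRank r i (Sum.inr i) < slackRank r i z := by
      obtain y | j := z
      · simp [slackRank]
      · simp [slackRank, show j ≠ i from fun h ↦ hz (h ▸ rfl)]
    intro z
    obtain rfl | hz := eq_or_ne z (Sum.inr i)
    · exact le_rfl
    · exact Prod.Lex.toLex_le_toLex.2 (Or.inl (bot_lt hz))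
  lt := by
    rintro i j hji (y | k) hy
    · refine Prod.Lex.toLex_lt_toLex.2 (Or.inl ?_)
      simpa [slackRank, hji] using WithBot.coe_lt_coe.2 (WithTop.coe_lt_top (r i y))
    · exact absurd ⟨k, rfl⟩ hy

theorem exists_finset_forall_exists_le [Finite I] [Finite Y] [Nonempty Y] (r : I → Y → α)
    (c : Y → I) :
    ∃ P : Finset Y, ∀ y, ∃ z ∈ P, ∀ x ∈ P, r (c z) y ≤ r (c z) x := by
  classical
  have := Fintype.ofFinite I
  obtain ⟨n, ⟨e⟩⟩ := Finite.exists_equiv_fin (Y ⊕ I)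
  let r' : I → Y ⊕ I → WithBot (WithTop α) ×ₗ Fin n := fun i z ↦ toLex (slackRank r i z, e z)
  have hr' : ∀ i, Function.Injective (r' i) := fun i z w h ↦
    e.injective (congrArg Prod.snd (toLex.injective h))
  have hle {i : I} {z w : Y ⊕ I} (h : r' i z ≤ r' i w) : slackRank r i z ≤ slackRank r i w :=
    Prod.Lex.monotone_fst _ _ h
  have hinl : ∃ z : Y ⊕ I, z ∉ Set.range Sum.inr := ⟨Sum.inl (Classical.arbitrary Y), by simp⟩
  obtain ⟨P, hP, himage⟩ := (isSlack_toLex_slackRank r e).exists_dominant_image_eq_univ hr' hinl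
    (c := Sum.elim c id) fun _ ↦ rfl
  refine ⟨P.toLeft, fun y ↦ ?_⟩
  obtain ⟨i, hi⟩ := hP (Sum.inl y)
  obtain ⟨z | j, hz, rfl⟩ := mem_image.1 (himage ▸ mem_univ i)
  · exact ⟨z, mem_toLeft.2 hz, fun x hx ↦ by simpa [slackRank] using hle (hi _ (mem_toLeft.1 hx))⟩
  · exact absurd (hle (hi _ hz)) (by simp [slackRank])

end Scarf

end Scarf

section Simplex

variable {ι : Type*}

lemma exists_le_and_forall_exists_apply_le [Finite ι] {T : Set (ι → ℝ)} (hT : T.Finite)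
    (hne : T.Nonempty) (hpos : ∀ x ∈ T, 0 ≤ x) (c : (ι → ℝ) → ι) :
    ∃ m : ι → ℝ, 0 ≤ m ∧ (∀ y ∈ T, ∃ i, y i ≤ m i) ∧ (∃ x ∈ T, m ≤ x) ∧
      ∀ k, m k = 0 ∨ ∃ z ∈ T, m ≤ z ∧ c z = k := by
  classical
  have : Finite T := hT
  have : Nonempty T := hne.to_subtype
  obtain ⟨P, hP⟩ := Scarf.exists_finset_forall_exists_le (fun i (x : T) ↦ x.1 i) (fun x ↦ c x)
  obtain ⟨x, hx, -⟩ := hP (Classical.arbitrary T)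
  let m : ι → ℝ := fun i ↦ if ∃ z ∈ P, c z.1 = i then P.inf' ⟨x, hx⟩ (fun z ↦ z.1 i) else 0
  have hm_pos {i : ι} (hi : ∃ z ∈ P, c z.1 = i) : m i = P.inf' ⟨x, hx⟩ (fun z ↦ z.1 i) := if_pos hi
  have hm_neg {i : ι} (hi : ¬∃ z ∈ P, c z.1 = i) : m i = 0 := if_neg hi
  have hmP : ∀ z ∈ P, m ≤ z.1 := fun z hz i ↦ by
    by_cases hi : ∃ z ∈ P, c z.1 = i
    · exact (hm_pos hi).trans_le (P.inf'_le (fun z ↦ z.1 i) hz)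
    · exact (hm_neg hi).trans_le (hpos z z.2 i)
  refine ⟨m, fun i ↦ ?_, fun y hy ↦ ?_, ⟨x, x.2, hmP x hx⟩, fun k ↦ ?_⟩
  · by_cases hi : ∃ z ∈ P, c z.1 = i
    · exact (P.le_inf' _ _ fun z _ ↦ hpos z z.2 i).trans_eq (hm_pos hi).symm
    · exact (hm_neg hi).ge
  · obtain ⟨z, hz, hyz⟩ := hP ⟨y, hy⟩
    exact ⟨c z, (P.le_inf' _ _ hyz).trans_eq (hm_pos ⟨z, hz, rfl⟩).symm⟩
  · by_cases hk : ∃ z ∈ P, c z.1 = k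
    · obtain ⟨z, hz, hzk⟩ := hk
      exact Or.inr ⟨z, z.2, hmP z hz, hzk⟩
    · exact Or.inl (hm_neg hk)

variable [Fintype ι] {m x : ι → ℝ}

lemma dist_le_one_sub_sum_of_mem_stdSimplex (hx : x ∈ stdSimplex ℝ ι) (hmx : m ≤ x) :
    dist x m ≤ 1 - ∑ i, m i := by
  have hsum : 0 ≤ 1 - ∑ i, m i := by
    rw [sub_nonneg, ← hx.2]
    exact Finset.sum_le_sum fun i _ ↦ hmx i
  refine (dist_pi_le_iff hsum).2 fun i ↦ ?_
  rw [Real.dist_eq, abs_of_nonneg (sub_nonneg.2 (hmx i))]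
  calc x i - m i ≤ ∑ j, (x j - m j) :=
        Finset.single_le_sum (fun j _ ↦ sub_nonneg.2 (hmx j)) (Finset.mem_univ i)
    _ = 1 - ∑ j, m j := by rw [Finset.sum_sub_distrib, hx.2]

lemma one_sub_sum_le_of_net_stdSimplex [Nonempty ι] {T : Set (ι → ℝ)} {ε : ℝ}
    (hT : ∀ p ∈ stdSimplex ℝ ι, ∃ y ∈ T, dist p y ≤ ε) (hm : 0 ≤ m)
    (hTm : ∀ y ∈ T, ∃ i, y i ≤ m i) : 1 - ∑ i, m i ≤ Fintype.card ι * ε := by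
  have hcard : (0 : ℝ) < Fintype.card ι := by exact_mod_cast Fintype.card_pos
  rw [← div_le_iff₀' hcard]
  obtain hsum | hsum := le_total (1 - ∑ i, m i) 0
  · classical
    obtain ⟨y, -, hy⟩ := hT _ (single_mem_stdSimplex ℝ (Classical.arbitrary ι))
    exact (div_nonpos_of_nonpos_of_nonneg hsum hcard.le).trans (dist_nonneg.trans hy)
  let p : ι → ℝ := fun i ↦ m i + (1 - ∑ j, m j) / Fintype.card ι
  have hp : p ∈ stdSimplex ℝ ι := by
    refine ⟨fun i ↦ add_nonneg (hm i) (div_nonneg hsum hcard.le), ?_⟩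
    simp only [p, Finset.sum_add_distrib, Finset.sum_const, Finset.card_univ, nsmul_eq_mul,
      mul_div_cancel₀ _ hcard.ne']
    ring
  obtain ⟨y, hyT, hy⟩ := hT p hp
  obtain ⟨i, hi⟩ := hTm y hyT
  calc (1 - ∑ j, m j) / Fintype.card ι = p i - m i := by simp [p]
    _ ≤ p i - y i := by gcongr
    _ ≤ dist (p i) (y i) := le_abs_self _
    _ ≤ ε := (dist_le_pi_dist p y i).trans hy

lemma exists_mem_stdSimplex_forall_exists_dist_le [Nonempty ι] (c : (ι → ℝ) → ι) {ε : ℝ}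
    (hε : 0 < ε) :
    ∃ x ∈ stdSimplex ℝ ι, ∀ k, ∃ y, dist y x ≤ ε ∧ (y k = 0 ∨ y ∈ stdSimplex ℝ ι ∧ c y = k) := by
  classical
  have hcard : (0 : ℝ) < Fintype.card ι := by exact_mod_cast Fintype.card_pos
  obtain ⟨T, hTs, hTfin, hT⟩ := (isCompact_stdSimplex ℝ ι).finite_cover_balls
    (show 0 < ε / 2 / Fintype.card ι by positivity)
  have hnet : ∀ p ∈ stdSimplex ℝ ι, ∃ y ∈ T, dist p y ≤ ε / 2 / Fintype.card ι := fun p hp ↦ by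
    obtain ⟨y, hy, hpy⟩ := Set.mem_iUnion₂.1 (hT hp)
    exact ⟨y, hy, (Metric.mem_ball.1 hpy).le⟩
  have hne : T.Nonempty :=
    (hnet _ (single_mem_stdSimplex ℝ (Classical.arbitrary ι))).imp fun _ ↦ And.left
  obtain ⟨m, hm, hTm, ⟨x, hx, hmx⟩, hcolour⟩ :=
    exists_le_and_forall_exists_apply_le hTfin hne (fun x hx ↦ (hTs hx).1) c
  have hdist : ∀ z ∈ T, m ≤ z → dist z m ≤ ε / 2 := fun z hz hmz ↦
    calc dist z m ≤ 1 - ∑ i, m i := dist_le_one_sub_sum_of_mem_stdSimplex (hTs hz) hmz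
      _ ≤ Fintype.card ι * (ε / 2 / Fintype.card ι) := one_sub_sum_le_of_net_stdSimplex hnet hm hTm
      _ = ε / 2 := mul_div_cancel₀ _ hcard.ne'
  refine ⟨x, hTs hx, fun k ↦ ?_⟩
  obtain hk | ⟨z, hz, hmz, hzk⟩ := hcolour k
  · exact ⟨m, by linarith [dist_comm x m, hdist x hx hmx], Or.inl hk⟩
  · refine ⟨z, ?_, Or.inr ⟨hTs hz, hzk⟩⟩
    linarith [dist_triangle_right z x m, hdist z hz hmz, hdist x hx hmx]

theorem open_KKM_lemma_general [Nonempty ι] (F : ι → Set (ι → ℝ))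
    (hopen : ∀ i, ∃ U : Set (ι → ℝ), IsOpen U ∧ F i = U ∩ stdSimplex ℝ ι)
    (hface : ∀ I : Finset ι, I.Nonempty →
      {x ∈ stdSimplex ℝ ι | ∀ j ∉ I, x j = 0} ⊆ ⋃ i ∈ I, F i) :
    (⋂ i, F i).Nonempty := by
  choose U hU hFU using hopen
  by_contra! hempty
  have hc : ∀ x ∈ stdSimplex ℝ ι, ∃ k, x ∉ U k := fun x hx ↦ by
    by_contra! hxU
    exact (hempty ▸ Set.mem_iInter.2 fun i ↦ hFU i ▸ ⟨hxU i, hx⟩ : x ∈ (∅ : Set (ι → ℝ)))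
  choose! c hc using hc
  have hcover : stdSimplex ℝ ι ⊆ ⋃ k, {x | x k ≠ 0} ∩ U k := fun x hx ↦ by
    obtain ⟨i, hi⟩ : ∃ i, x i ≠ 0 := by
      by_contra! h
      simpa [h] using hx.2
    obtain ⟨k, hk, hxF⟩ := Set.mem_iUnion₂.1 <|
      hface {k | x k ≠ 0} ⟨i, by simpa using hi⟩ ⟨hx, fun j hj ↦ by simpa using hj⟩
    rw [hFU k] at hxF
    exact Set.mem_iUnion.2 ⟨k, by simpa using hk, hxF.1⟩
  obtain ⟨δ, hδ, hball⟩ := lebesgue_number_lemma_of_metric (isCompact_stdSimplex ℝ ι)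
    (fun k ↦ (isOpen_ne_fun (continuous_apply k) continuous_const).inter (hU k)) hcover
  obtain ⟨x, hx, hnear⟩ := exists_mem_stdSimplex_forall_exists_dist_le c (half_pos hδ)
  obtain ⟨k, hk⟩ := hball x hx
  obtain ⟨y, hyx, hy⟩ := hnear k
  obtain ⟨hyk, hyU⟩ := hk (Metric.mem_ball.2 (hyx.trans_lt (half_lt_self hδ)))
  obtain hy0 | ⟨hys, rfl⟩ := hy
  · exact hyk hy0
  · exact hc y hys hyU

end Simplex

/-- Open KKM Lemma: if `F 1, …, F n` are relatively open subsets of the standard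
simplex `Δₙ` such that every face `S(e_{i₁}, …, e_{i_p})` is contained in
`F i₁ ∪ ⋯ ∪ F i_p`, then `F 1 ∩ ⋯ ∩ F n` is nonempty. -/
theorem open_KKM_lemma (n : ℕ) (hn : 0 < n) (F : Fin n → Set (Fin n → ℝ))
    (hsub : ∀ i, F i ⊆ stdSimplex ℝ (Fin n))
    (hopen : ∀ i, ∃ U : Set (Fin n → ℝ), IsOpen U ∧ F i = U ∩ stdSimplex ℝ (Fin n))
    (hface : ∀ I : Finset (Fin n), I.Nonempty →
      {x ∈ stdSimplex ℝ (Fin n) | ∀ j ∉ I, x j = 0} ⊆ ⋃ i ∈ I, F i) :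
    (⋂ i, F i).Nonempty := by
  have : Nonempty (Fin n) := ⟨⟨0, hn⟩⟩
  exact open_KKM_lemma_general F hopen hface
end

section
/- Let h : ℝⁿ₊ → ℝⁿ be continuous. Assume hᵢ(x) ≥ 0 for every x ∈ ℝⁿ₊ with xᵢ = 0, and assume there exists no x ∈ ℝⁿ₊ with x ≠ 0 and h(x) ≥ 0. Then there exists v in the standard simplex Δₙ with h(v) ≪ 0, i.e. hᵢ(v) < 0 for all i = 1, …, n. -/
/-!
The sets `{x | h x i < 0}` are relatively open in the simplex, cover it because `h x ≥ 0` never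
holds, and each avoids the facet `x i = 0`; a common point of all of them is the required `v`. That
open sets with these properties have a common point is a form of the Knaster–Kuratowski–Mazurkiewicz
theorem. By Lebesgue's number lemma it reduces to finding, for a colouring in which a point of
colour `i` has its `i`-th coordinate bounded away from `0`, points of all colours arbitrarily close
to one another.

Such points come from Scarf's dominating sets in a fine net of the simplex to which one slack vertex
per coordinate is added. A parity argument over pivoting steps, as in Sperner's lemma, yields a
dominating set of all colours, and the points of the net in it are close to one another. The slack
vertices are coloured by a cyclic permutation `σ`. If the slack `i` is missing from the dominating
set, then its colour `σ i` occurs on a point of the net, which is then far from the facet `σ i`, so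
that the slack `σ i` is missing too. Hence all slacks are missing, and all colours occur on points
of the net.
-/

section Dominating

open Finset

theorem card_filter_image_erase_eq_image {α β : Type*} [DecidableEq α] [DecidableEq β] {f : α → β}
    {s : Finset α} (hcard : #(s.image f) + 1 = #s) :
    #{a ∈ s | (s.erase a).image f = s.image f} = 2 := by
  obtain ⟨i, hi, j, hj, hij, hfij⟩ :=
    exists_ne_map_eq_of_card_image_lt (by omega : #(s.image f) < #s)
  have image_erase_iff (a) (ha : a ∈ s) :
      (s.erase a).image f = s.image f ↔ ∃ b ∈ s.erase a, f b = f a := by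
    rw [← mem_image, ← insert_eq_self, ← image_insert, insert_erase ha, eq_comm]
  have hinj : Set.InjOn f (s.erase i) := by
    rw [← card_image_iff, (image_erase_iff i hi).2 ⟨j, by grind, hfij.symm⟩, card_erase_of_mem hi]
    omega
  have hpair : {a ∈ s | (s.erase a).image f = s.image f} = {i, j} := by
    ext a
    rw [mem_filter, mem_insert, mem_singleton]
    constructor
    · rintro ⟨ha, hb⟩
      obtain ⟨b, hb, hba⟩ := (image_erase_iff a ha).1 hb
      by_contra! hne
      by_cases hbi : b = i
      · exact hne.2 (hinj (by grind) (by grind) (by rw [← hba, hbi, hfij]))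
      · exact ne_of_mem_erase hb (hinj (by grind) (by grind) hba)
    · rintro (rfl | rfl)
      · exact ⟨hi, (image_erase_iff a hi).2 ⟨j, by grind, hfij.symm⟩⟩
      · exact ⟨hj, (image_erase_iff a hj).2 ⟨i, by grind, hfij⟩⟩
  rw [hpair, card_pair hij]

theorem odd_card_filter_image_erase_iff {V I : Type*} [DecidableEq V] [Fintype I] [DecidableEq I]
    {S : Finset V} (hS : #S = Fintype.card I) (c : V → I) (j : I) :
    Odd #{v ∈ S | (S.erase v).image c = univ.erase j} ↔ S.image c = univ := by
  by_cases huniv : S.image c = univ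
  · have hinj : Set.InjOn c S := card_image_iff.1 (by rw [huniv, hS, card_univ])
    obtain ⟨w, hw, rfl⟩ : ∃ w ∈ S, c w = j := mem_image.1 (huniv ▸ mem_univ j)
    have hdoor : {v ∈ S | (S.erase v).image c = univ.erase (c w)} = {w} := by
      ext v
      rw [mem_filter, mem_singleton]
      refine ⟨fun ⟨_, h⟩ => ?_, fun h => ⟨h ▸ hw, ?_⟩⟩
      · by_contra hvw
        have : c w ∈ univ.erase (c w) := h ▸ mem_image_of_mem c (mem_erase.2 ⟨Ne.symm hvw, hw⟩)
        simp at this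
      · rw [h, ← sdiff_singleton_eq_erase, image_sdiff_of_injOn hinj (by simpa using hw), huniv,
          image_singleton, sdiff_singleton_eq_erase]
    simp [hdoor, huniv]
  · refine iff_of_false ?_ huniv
    rw [Nat.not_odd_iff_even]
    by_cases herase : S.image c = univ.erase j
    · rw [← herase, card_filter_image_erase_eq_image]
      · exact even_two
      · rw [herase, card_erase_add_one (mem_univ j), card_univ, hS]
    · rw [filter_eq_empty_iff.2, card_empty]
      · exact Even.zero
      · intro v hv hdoor
        rw [← insert_erase hv, image_insert, hdoor] at huniv herase
        grind

theorem sum_card_erase_eq_sum_card_insert {V : Type*} [Fintype V] [DecidableEq V]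
    (K D : Finset (Finset V)) :
    ∑ S ∈ K, #{v ∈ S | S.erase v ∈ D} = ∑ R ∈ D, #{x | x ∉ R ∧ insert x R ∈ K} := by
  rw [← card_sigma, ← card_sigma]
  refine card_nbij' (fun p => ⟨p.1.erase p.2, p.2⟩) (fun p => ⟨insert p.2 p.1, p.2⟩) ?_ ?_ ?_ ?_ <;>
    rintro ⟨S, v⟩ h <;> simp_all

variable {V I α : Type*} [LinearOrder α] {r : I → V → α}

/-- Scarf's dominating sets for the rankings `r i` of `V`: no element of `V` lies, in every ranking,
strictly above the minimum of `S`. -/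
def IsDominating (r : I → V → α) (S : Finset V) : Prop :=
  ∀ y, ∃ i, ∀ x ∈ S, r i y ≤ r i x

/-- The ranking `r k` is redundant for `S`: each member of `S` is the minimum of `S` in some other
ranking. A dominating set with one element fewer than there are rankings has two redundant ones;
they are the directions in which it can be extended. -/
def IsRedundant (r : I → V → α) (S : Finset V) (k : I) : Prop :=
  ∀ z ∈ S, ∃ l ≠ k, ∀ x ∈ S, r l z ≤ r l x

/-- `y` lies above the minimum of `S` in every ranking except possibly `r k`: the candidates for
extending a dominating set `S` in the direction `k`. -/
def ExceedsOff (r : I → V → α) (S : Finset V) (k : I) (y : V) : Prop :=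
  ∀ l ≠ k, ∃ z ∈ S, r l z < r l y

/-- `x` is a highest candidate in the direction `k`, hence the element that Scarf's pivoting step
adds to `S`. -/
def IsPivot (r : I → V → α) (S : Finset V) (k : I) (x : V) : Prop :=
  ExceedsOff r S k x ∧ ∀ y, ExceedsOff r S k y → r k y ≤ r k x

variable {S R : Finset V} {k : I} {x y : V}

theorem IsDominating.mono (hS : IsDominating r S) (hRS : R ⊆ S) : IsDominating r R := fun y =>
  (hS y).imp fun _ hi x hx => hi x (hRS hx)

theorem IsDominating.le_of_exceedsOff (hS : IsDominating r S) (hy : ExceedsOff r S k y) :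
    ∀ z ∈ S, r k y ≤ r k z := by
  obtain ⟨l, hl⟩ := hS y
  obtain rfl : l = k := by
    by_contra hlk
    obtain ⟨z, hz, hzy⟩ := hy l hlk
    exact (hl z hz).not_gt hzy
  exact hl

theorem exists_isPivot [Finite V] (hy : ExceedsOff r S k y) : ∃ x, IsPivot r S k x :=
  Set.exists_max_image {x | ExceedsOff r S k x} (r k) (Set.toFinite _) ⟨y, hy⟩

theorem IsPivot.eq (hr : ∀ i, Function.Injective (r i)) (hx : IsPivot r S k x)
    (hy : IsPivot r S k y) : x = y :=
  hr k ((hy.2 x hx.1).antisymm (hx.2 y hy.1))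

theorem IsDominating.index_eq_of_isPivot {l : I} (hS : IsDominating r S) (hk : IsPivot r S k x)
    (hl : IsPivot r S l x) : k = l := by
  by_contra hkl
  obtain ⟨i, hi⟩ := hS x
  obtain ⟨z, hz, hzx⟩ : ∃ z ∈ S, r i z < r i x := by
    by_cases hik : i = k
    · exact hl.1 i (hik ▸ hkl)
    · exact hk.1 i hik
  exact (hi z hz).not_gt hzx

theorem IsPivot.notMem (hx : IsPivot r S k x) (hk : IsRedundant r S k) : x ∉ S := fun hxS =>
  have ⟨l, hlk, hl⟩ := hk x hxS
  have ⟨z, hz, hzx⟩ := hx.1 l hlk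
  (hl z hz).not_gt hzx

open Classical in
theorem IsPivot.isDominating_insert (hx : IsPivot r S k x) (hS : IsDominating r S) :
    IsDominating r (insert x S) := by
  intro y
  by_cases hy : ExceedsOff r S k y
  · exact ⟨k, forall_mem_insert _ _ _ |>.2 ⟨hx.2 y hy, hS.le_of_exceedsOff hy⟩⟩
  · simp only [ExceedsOff, not_forall, not_exists, not_and, not_lt] at hy
    obtain ⟨l, hlk, hl⟩ := hy
    obtain ⟨z, hz, hzx⟩ := hx.1 l hlk
    exact ⟨l, forall_mem_insert _ _ _ |>.2 ⟨(hl z hz).trans hzx.le, hl⟩⟩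

open Classical in
theorem exists_isPivot_of_isDominating_insert [Fintype I] (hr : ∀ i, Function.Injective (r i))
    (hcard : #S + 1 = Fintype.card I) (hx : x ∉ S) (hdom : IsDominating r (insert x S)) :
    ∃ k, IsRedundant r S k ∧ IsPivot r S k x := by
  have hmin (z : (insert x S : Finset V)) := hdom z
  choose ind hind using hmin
  have ind_inj : Function.Injective ind := fun z w hzw => Subtype.ext <|
    hr (ind z) ((hind z w w.2).antisymm (hzw ▸ hind w z z.2))
  have ind_surj : Function.Surjective ind :=
    ((Fintype.bijective_iff_injective_and_card ind).2 ⟨ind_inj, by simp [hx, hcard]⟩).2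
  let x' : (insert x S : Finset V) := ⟨x, mem_insert_self x S⟩
  refine ⟨ind x', fun z hz => ?_, fun l hl => ?_, fun y hy => ?_⟩
  · let z' : (insert x S : Finset V) := ⟨z, mem_insert_of_mem hz⟩
    refine ⟨ind z', fun h => hx ?_, fun w hw => hind z' w (mem_insert_of_mem hw)⟩
    have : z = x := congrArg Subtype.val (ind_inj h)
    exact this ▸ hz
  · obtain ⟨z, rfl⟩ := ind_surj l
    have hzx : (z : V) ≠ x := fun h => hl (congrArg ind (Subtype.ext h))
    exact ⟨z, mem_of_mem_insert_of_ne z.2 hzx, (hind z x x'.2).lt_of_ne ((hr _).ne hzx)⟩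
  · refine hdom.le_of_exceedsOff (fun l hl => ?_) x x'.2
    obtain ⟨z, hz, hzy⟩ := hy l hl
    exact ⟨z, mem_insert_of_mem hz, hzy⟩

open Classical in
theorem IsDominating.card_filter_isDominating_insert [Fintype V] [Fintype I]
    (hr : ∀ i, Function.Injective (r i)) (hcard : #S + 1 = Fintype.card I) (hS : IsDominating r S) :
    #{x | x ∉ S ∧ IsDominating r (insert x S)} =
      #{k | IsRedundant r S k ∧ ∃ y, ExceedsOff r S k y} := by
  have hpivot (k) (hk : IsRedundant r S k ∧ ∃ y, ExceedsOff r S k y) : ∃ x, IsPivot r S k x :=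
    hk.2.elim fun _ => exists_isPivot
  choose pivot hpivot using hpivot
  refine (card_bij (fun k hk => pivot k ((mem_filter_univ k).1 hk)) ?_ ?_ ?_).symm <;>
    simp only [mem_filter_univ]
  · exact fun k hk => ⟨(hpivot k hk).notMem hk.1, (hpivot k hk).isDominating_insert hS⟩
  · exact fun k hk l hl hkl => hS.index_eq_of_isPivot (hpivot k hk) (hkl ▸ hpivot l hl)
  · rintro x ⟨hxS, hx⟩
    obtain ⟨k, hk, hkx⟩ := exists_isPivot_of_isDominating_insert hr hcard hxS hx
    exact ⟨k, ⟨hk, x, hkx.1⟩, (hpivot k ⟨hk, x, hkx.1⟩).eq hr hkx⟩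

open Classical in
theorem IsDominating.card_filter_isRedundant [Fintype I] (hr : ∀ i, Function.Injective (r i))
    (hcard : #S + 1 = Fintype.card I) (hne : S.Nonempty) (hS : IsDominating r S) :
    #{k | IsRedundant r S k} = 2 := by
  choose argmin hmem hmin using fun l => S.exists_min_image (r l) hne
  have argmin_eq {l z} (hz : z ∈ S) (h : ∀ x ∈ S, r l z ≤ r l x) : argmin l = z :=
    hr l ((hmin l z hz).antisymm (h _ (hmem l)))
  have himage : univ.image argmin = S := by
    refine (image_subset_iff.2 fun l _ => hmem l).antisymm fun z hz => ?_
    obtain ⟨l, hl⟩ := hS z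
    exact mem_image.2 ⟨l, mem_univ l, argmin_eq hz hl⟩
  have hredundant (k) : IsRedundant r S k ↔ (univ.erase k).image argmin = univ.image argmin := by
    rw [himage]
    refine ⟨fun hk => (image_subset_iff.2 fun l _ => hmem l).antisymm fun z hz => ?_, ?_⟩
    · obtain ⟨l, hlk, hl⟩ := hk z hz
      exact mem_image.2 ⟨l, by simpa using hlk, argmin_eq hz hl⟩
    · intro hk z hz
      obtain ⟨l, hl, rfl⟩ := mem_image.1 (hk ▸ hz)
      exact ⟨l, ne_of_mem_erase hl, hmin l⟩
  simp only [hredundant]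
  exact card_filter_image_erase_eq_image (by rw [himage, hcard, card_univ])

/-- `s i` are Scarf's slack vertices: `s i` is the bottom of the ranking `r i`, and lies above every
non-slack vertex in the other rankings. They play the role of the facets of the simplex. -/
structure IsSlack (r : I → V → α) (s : I → V) : Prop where
  lt_of_ne (i : I) {v : V} : v ≠ s i → r i (s i) < r i v
  lt_of_notMem_range {i j : I} {v : V} : j ≠ i → v ∉ Set.range s → r i v < r i (s j)

variable {s : I → V} {v : V}

theorem IsSlack.le (hs : IsSlack r s) (i : I) (v : V) : r i (s i) ≤ r i v := by
  by_cases hv : v = s i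
  · rw [hv]
  · exact (hs.lt_of_ne i hv).le

theorem IsSlack.exceedsOff (hs : IsSlack r s) (hv : v ∉ Set.range s) (hvS : v ∈ S) (k : I) :
    ExceedsOff r S k (s k) := fun _ hl =>
  ⟨v, hvS, hs.lt_of_notMem_range hl.symm hv⟩

theorem IsSlack.exists_notMem (hs : IsSlack r s) (hv : v ∉ Set.range s) (hS : IsDominating r S) :
    ∃ i, s i ∉ S ∧ ∀ x ∈ S, r i v ≤ r i x := by
  obtain ⟨i, hi⟩ := hS v
  exact ⟨i, fun h => (hi _ h).not_gt (hs.lt_of_ne i fun h => hv ⟨i, h.symm⟩), hi⟩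

open Classical in
theorem IsSlack.isDominating_image_erase [Fintype I] (hs : IsSlack r s) (j : I) :
    IsDominating r ((univ.erase j).image s) := by
  intro y
  by_cases hy : y ∈ Set.range s
  · obtain ⟨i, rfl⟩ := hy
    exact ⟨i, fun x _ => hs.le i x⟩
  · refine ⟨j, fun x hx => ?_⟩
    obtain ⟨i, hi, rfl⟩ := mem_image.1 hx
    exact (hs.lt_of_notMem_range (ne_of_mem_erase hi) hy).le

theorem IsSlack.injective (hs : IsSlack r s) (hV : ∃ v, v ∉ Set.range s) :
    Function.Injective s := by
  intro i j hij
  obtain ⟨v, hv⟩ := hV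
  by_contra hne
  exact (hs.lt_of_notMem_range (Ne.symm hne) hv).not_ge (hij ▸ hs.le i v)

open Classical in
theorem IsSlack.isRedundant_and_exceedsOff_iff [Fintype I] (hs : IsSlack r s)
    (hV : ∃ v, v ∉ Set.range s) (j k : I) :
    (IsRedundant r ((univ.erase j).image s) k ∧ ∃ y, ExceedsOff r ((univ.erase j).image s) k y) ↔
      k = j := by
  have mem_ridge {i : I} (hi : i ≠ j) : s i ∈ (univ.erase j).image s :=
    mem_image_of_mem s (mem_erase.2 ⟨hi, mem_univ i⟩)
  constructor
  · rintro ⟨hk, y, hy⟩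
    by_contra hkj
    have hmin : ∀ x ∈ (univ.erase j).image s, r j (s k) ≤ r j x := by
      obtain ⟨l, hlk, hl⟩ := hk (s k) (mem_ridge hkj)
      obtain rfl : l = j := by
        by_contra hlj
        exact (hl _ (mem_ridge hlj)).not_gt (hs.lt_of_ne l ((hs.injective hV).ne hlk.symm))
      exact hl
    obtain ⟨z, hz, hzy⟩ := hy j (Ne.symm hkj)
    have hlt : r j (s k) < r j y := (hmin z hz).trans_lt hzy
    refine hlt.not_gt (hs.lt_of_notMem_range hkj ?_)
    rintro ⟨q, rfl⟩
    obtain rfl : q = k := by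
      by_contra hqk
      obtain ⟨w, -, hw⟩ := hy q hqk
      exact hw.not_ge (hs.le q w)
    exact hlt.false
  · rintro rfl
    obtain ⟨v, hv⟩ := hV
    refine ⟨fun z hz => ?_, v, fun l hl => ⟨s l, mem_ridge hl, ?_⟩⟩
    · obtain ⟨l, hl, rfl⟩ := mem_image.1 hz
      exact ⟨l, ne_of_mem_erase hl, fun x _ => hs.le l x⟩
    · exact hs.lt_of_ne l fun h => hv ⟨l, h.symm⟩

open Classical in
theorem eq_image_erase_of_image_eq_erase [Fintype I] {c : V → I} {j : I}
    (hcs : Function.Injective (c ∘ s)) (hc : R.image c = univ.erase (c (s j)))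
    (hR : ∀ v ∈ R, v ∈ Set.range s) : R = (univ.erase j).image s := by
  ext x
  simp only [mem_image, mem_erase, mem_univ, and_true]
  constructor
  · intro hx
    obtain ⟨i, rfl⟩ := hR x hx
    exact ⟨i, fun h => ne_of_mem_erase (hc ▸ mem_image_of_mem c hx) (h ▸ rfl), rfl⟩
  · rintro ⟨i, hi, rfl⟩
    obtain ⟨x, hx, hxi⟩ := mem_image.1 (hc ▸ mem_erase.2 ⟨hcs.ne hi, mem_univ (c (s i))⟩)
    obtain ⟨l, rfl⟩ := hR x hx
    exact hcs hxi ▸ hx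

open Classical in
theorem IsSlack.odd_card_filter_isDominating_insert_iff [Fintype V] [Fintype I]
    (hr : ∀ i, Function.Injective (r i)) (hs : IsSlack r s) (hV : ∃ v, v ∉ Set.range s)
    {c : V → I} (hcs : Function.Injective (c ∘ s)) {j : I}
    (hcard : #R + 1 = Fintype.card I) (hR : IsDominating r R)
    (hc : R.image c = univ.erase (c (s j))) :
    Odd #{x | x ∉ R ∧ IsDominating r (insert x R)} ↔ R = (univ.erase j).image s := by
  rw [hR.card_filter_isDominating_insert hr hcard]
  by_cases hridge : R = (univ.erase j).image s
  · subst hridge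
    rw [card_eq_one.2 ⟨j, ext fun k => ?_⟩]
    · exact iff_of_true odd_one rfl
    · rw [mem_filter_univ, mem_singleton, hs.isRedundant_and_exceedsOff_iff hV]
  · obtain ⟨v, hvR, hv⟩ : ∃ v ∈ R, v ∉ Set.range s := by
      contrapose! hridge
      exact eq_image_erase_of_image_eq_erase hcs hc hridge
    have hexceeds (k) : ∃ y, ExceedsOff r R k y := ⟨s k, hs.exceedsOff hv hvR k⟩
    simp [hexceeds, hridge, hR.card_filter_isRedundant hr hcard ⟨v, hvR⟩]

open Classical in
theorem IsSlack.odd_card_rainbow [Fintype V] [Fintype I] (hr : ∀ i, Function.Injective (r i))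
    (hs : IsSlack r s) (hV : ∃ v, v ∉ Set.range s) {c : V → I}
    (hcs : Function.Bijective (c ∘ s)) :
    Odd #{S | (#S = Fintype.card I ∧ IsDominating r S) ∧ S.image c = univ} := by
  obtain ⟨v, -⟩ := id hV
  obtain ⟨j, -⟩ := hcs.2 (c v)
  let K : Finset (Finset V) := {S | #S = Fintype.card I ∧ IsDominating r S}
  let D : Finset (Finset V) :=
    {R | #R + 1 = Fintype.card I ∧ IsDominating r R ∧ R.image c = univ.erase (c (s j))}
  -- Incidences between `K` and `D` are counted twice: as in Sperner's lemma, the elements of `K`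
  -- with an odd number of faces in `D` are those of all colours, while the only element of `D` with
  -- an odd number of extensions in `K` consists of slacks.
  have hridge : (univ.erase j).image s ∈ D := by
    have hinj := hs.injective hV
    rw [mem_filter_univ, card_image_of_injective _ hinj, card_erase_add_one (mem_univ j)]
    refine ⟨rfl, hs.isDominating_image_erase j, ?_⟩
    rw [image_image, image_erase hcs.1, image_univ_of_surjective hcs.2]
    rfl
  have hfacet : ∀ S ∈ K, Odd #{v ∈ S | S.erase v ∈ D} ↔ S.image c = univ := by
    intro S hS
    obtain ⟨hcard, hdom⟩ := (mem_filter_univ S).1 hS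
    have hdoor : {v ∈ S | S.erase v ∈ D} = {v ∈ S | (S.erase v).image c = univ.erase (c (s j))} :=
      filter_congr fun v hv => by
        simp [D, card_erase_add_one hv, hcard, hdom.mono (erase_subset v S)]
    rw [hdoor, odd_card_filter_image_erase_iff hcard]
  have hcofacet : ∀ R ∈ D, Odd #{x | x ∉ R ∧ insert x R ∈ K} ↔ R = (univ.erase j).image s := by
    intro R hR
    obtain ⟨hcard, hdom, hc⟩ := (mem_filter_univ R).1 hR
    have hinsert (x) : x ∉ R ∧ insert x R ∈ K ↔ x ∉ R ∧ IsDominating r (insert x R) :=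
      and_congr_right fun hx => by simp [K, card_insert_of_notMem hx, hcard]
    rw [filter_congr fun x _ => hinsert x,
      hs.odd_card_filter_isDominating_insert_iff hr hV hcs.1 hcard hdom hc]
  rw [← filter_filter, ← filter_congr hfacet, ← odd_sum_iff_odd_card_odd,
    sum_card_erase_eq_sum_card_insert, odd_sum_iff_odd_card_odd, filter_congr hcofacet,
    filter_eq', if_pos hridge, card_singleton]
  exact odd_one

theorem exists_isDominating_rainbow [Finite V] (hs : IsSlack r s) (hV : ∃ v, v ∉ Set.range s)
    {c : V → I} (hcs : Function.Bijective (c ∘ s)) :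
    ∃ S : Finset V, IsDominating r S ∧ ∀ i, ∃ v ∈ S, c v = i := by
  classical
  have := Fintype.ofFinite V
  have := Fintype.ofInjective s (hs.injective hV)
  obtain ⟨e, he⟩ := Countable.exists_injective_nat V
  -- Ties in the rankings are broken by an enumeration of `V`.
  let r' : I → V → α ×ₗ ℕ := fun i v => toLex (r i v, e v)
  have hr' (i) : Function.Injective (r' i) := fun v w h => he (congrArg (fun p => (ofLex p).2) h)
  have hlt {i v w} (h : r i v < r i w) : r' i v < r' i w := Prod.Lex.toLex_lt_toLex.2 (.inl h)
  have hs' : IsSlack r' s :=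
    ⟨fun i _ h => hlt (hs.lt_of_ne i h), fun h h' => hlt (hs.lt_of_notMem_range h h')⟩
  obtain ⟨S, hS⟩ := card_pos.1 (hs'.odd_card_rainbow hr' hV hcs).pos
  obtain ⟨⟨-, hdom⟩, hc⟩ := (mem_filter_univ S).1 hS
  refine ⟨S, fun y => ?_, fun i => mem_image.1 (hc ▸ mem_univ i)⟩
  obtain ⟨i, hi⟩ := hdom y
  exact ⟨i, fun x hx => Prod.Lex.monotone_fst _ _ (hi x hx)⟩

end Dominating

section Simplex

open Finset

variable {ι : Type*} [Fintype ι] {T : Set (stdSimplex ℝ ι)} {ε : ℝ}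

theorem one_lt_sum_add_card_mul_of_net [Nonempty ι] (hT : ∀ x, ∃ t ∈ T, dist x t < ε)
    {C : Finset ι} {μ : ι → ℝ} (hμ : 0 ≤ μ)
    (hlow : ∀ t ∈ T, ∃ i ∈ C, t i ≤ μ i) : 1 < ∑ i, μ i + #C * ε := by
  classical
  by_contra! hsum
  obtain ⟨t₀, ht₀, hdist₀⟩ := hT (Classical.arbitrary _)
  have hε : 0 < ε := dist_nonneg.trans_lt hdist₀
  obtain ⟨i₀, hi₀, -⟩ := hlow t₀ ht₀
  have hC : (0 : ℝ) < #C := by exact_mod_cast card_pos.2 ⟨i₀, hi₀⟩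
  let d : ℝ := (1 - ∑ i, μ i) / #C
  have hd : ε ≤ d := by
    rw [le_div_iff₀ hC]
    linarith
  have hy : (fun i => μ i + if i ∈ C then d else 0) ∈ stdSimplex ℝ ι := by
    refine ⟨fun i => add_nonneg (hμ i) (ite_nonneg (hε.le.trans hd) le_rfl), ?_⟩
    simp [sum_add_distrib, d, mul_div_cancel₀ _ hC.ne']
  obtain ⟨t, ht, hyt⟩ := hT ⟨_, hy⟩
  obtain ⟨i, hi, hti⟩ := hlow t ht
  have hcoord : dist (μ i + if i ∈ C then d else 0) (t i) < ε :=
    (dist_le_pi_dist _ _ i).trans_lt hyt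
  rw [if_pos hi, Real.dist_eq] at hcoord
  linarith [le_abs_self (μ i + d - t i)]

theorem exists_corner_of_net (hT : ∀ x, ∃ t ∈ T, dist x t < ε)
    {F : Finset (stdSimplex ℝ ι)} (hF : F.Nonempty) {C : Finset ι}
    (hlow : ∀ t ∈ T, ∃ i ∈ C, ∀ x ∈ F, t i ≤ x i) :
    ∃ μ : ι → ℝ, (∀ i ∉ C, μ i = 0) ∧
      ∀ x ∈ F, ∀ i, μ i ≤ x i ∧ x i < μ i + Fintype.card ι * ε := by
  classical
  choose argmin hmem hmin using fun i : ι => F.exists_min_image (fun x => x i) hF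
  let μ (i : ι) : ℝ := if i ∈ C then argmin i i else 0
  have hμC (i) (hi : i ∉ C) : μ i = 0 := if_neg hi
  have hμ (i) : 0 ≤ μ i := ite_nonneg (stdSimplex.zero_le _ i) le_rfl
  have hle (x) (hx : x ∈ F) (i) : μ i ≤ x i := by
    by_cases hi : i ∈ C
    · simpa [μ, hi] using hmin i x hx
    · simp [hμC i hi]
  obtain ⟨x₀, -⟩ := hF
  obtain ⟨t₀, ht₀, hdist₀⟩ := hT x₀
  have hε : 0 < ε := dist_nonneg.trans_lt hdist₀
  have : Nonempty ι := (hlow t₀ ht₀).nonempty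
  have hsum := one_lt_sum_add_card_mul_of_net hT hμ fun t ht => by
    obtain ⟨i, hi, hti⟩ := hlow t ht
    exact ⟨i, hi, by simpa [μ, hi] using hti _ (hmem i)⟩
  have hcard : (#C : ℝ) * ε ≤ Fintype.card ι * ε := by gcongr; exact card_le_univ C
  refine ⟨μ, hμC, fun x hx i => ⟨hle x hx i, ?_⟩⟩
  have hexcess : x i - μ i ≤ ∑ j, (x j - μ j) :=
    single_le_sum (fun j _ => sub_nonneg.2 (hle x hx j)) (mem_univ i)
  rw [sum_sub_distrib, stdSimplex.sum_eq_one] at hexcess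
  linarith

theorem exists_perm_forall_eq_univ (ι : Type*) [Finite ι] :
    ∃ σ : Equiv.Perm ι, ∀ C : Set ι, C.Nonempty → Set.MapsTo σ C C → C = Set.univ := by
  classical
  have := Fintype.ofFinite ι
  obtain ⟨σ, hσ, -⟩ := (univ : Finset ι).exists_cycleOn
  refine ⟨σ, fun C ⟨i, hi⟩ hC => Set.eq_univ_of_forall fun j => ?_⟩
  obtain ⟨n, -, rfl⟩ := hσ.exists_pow_eq (mem_univ i) (mem_univ j)
  rw [Equiv.Perm.coe_pow]
  exact hC.iterate n hi

/-- Rankings on the points of `T` together with one slack vertex per coordinate: points are ranked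
by their barycentric coordinates, and `-1` and `2` lie outside the range `[0, 1]` of these, so that
the vertices `Sum.inr k` are slacks. -/
def netKey [DecidableEq ι] (T : Set (stdSimplex ℝ ι)) (i : ι) : T ⊕ ι → ℝ :=
  Sum.elim (fun t => t.1 i) fun k => if k = i then -1 else 2

theorem isSlack_netKey [DecidableEq ι] (T : Set (stdSimplex ℝ ι)) :
    IsSlack (netKey T) Sum.inr where
  lt_of_ne i v hv := by
    rcases v with t | k
    · simpa [netKey] using neg_one_lt_zero.trans_le (stdSimplex.zero_le t.1 i)
    · have hki : k ≠ i := fun h => hv (congrArg Sum.inr h)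
      norm_num [netKey, hki]
  lt_of_notMem_range {i j v} hj hv := by
    rcases v with t | k
    · simpa [netKey, hj] using (stdSimplex.le_one t.1 i).trans_lt one_lt_two
    · exact absurd ⟨k, rfl⟩ hv

theorem exists_forall_le_forall_color (hTfin : T.Finite) (hTne : T.Nonempty)
    (c : stdSimplex ℝ ι → ι) (σ : Equiv.Perm ι) :
    ∃ (F : Finset (stdSimplex ℝ ι)) (C : Finset ι),
      (∀ t ∈ T, ∃ i ∈ C, ∀ x ∈ F, t i ≤ x i) ∧ ∀ i ∈ C, ∃ x ∈ F, c x = σ i := by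
  classical
  have := hTfin.to_subtype
  obtain ⟨t₀, ht₀⟩ := hTne
  obtain ⟨S, hS, hcolor⟩ := exists_isDominating_rainbow (isSlack_netKey T)
    (c := Sum.elim (fun t => c t) σ) ⟨.inl ⟨t₀, ht₀⟩, by simp⟩ σ.bijective
  let C : Finset ι := {i | .inr i ∉ S}
  refine ⟨S.toLeft.map (.subtype _), C, fun t ht => ?_, fun i hi => ?_⟩
  · obtain ⟨i, hi, hle⟩ := (isSlack_netKey T).exists_notMem (v := .inl ⟨t, ht⟩) (by simp) hS
    refine ⟨i, (mem_filter_univ i).2 hi, fun x hx => ?_⟩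
    obtain ⟨x, hxS, rfl⟩ := mem_map.1 hx
    exact hle (.inl x) (mem_toLeft.1 hxS)
  · obtain ⟨x | j, hx, hxi⟩ := hcolor (σ i)
    · exact ⟨x, mem_map_of_mem _ (mem_toLeft.2 hx), hxi⟩
    · exact absurd (σ.injective hxi ▸ hx) ((mem_filter_univ i).1 hi)

theorem exists_forall_color_of_net [Nonempty ι] (hTfin : T.Finite)
    (hT : ∀ x, ∃ t ∈ T, dist x t < ε) {c : stdSimplex ℝ ι → ι}
    (hc : ∀ x : stdSimplex ℝ ι, Fintype.card ι * ε ≤ x (c x)) :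
    ∃ F : Finset (stdSimplex ℝ ι), (∀ k, ∃ x ∈ F, c x = k) ∧
      ∀ x ∈ F, ∀ y ∈ F, dist x y < Fintype.card ι * ε := by
  obtain ⟨t₀, ht₀, hdist₀⟩ := hT (Classical.arbitrary _)
  have hε : 0 < ε := dist_nonneg.trans_lt hdist₀
  obtain ⟨σ, hσ⟩ := exists_perm_forall_eq_univ ι
  obtain ⟨F, C, hlow, hcolor⟩ := exists_forall_le_forall_color hTfin ⟨t₀, ht₀⟩ c σ
  obtain ⟨i₀, hi₀, -⟩ := hlow t₀ ht₀
  obtain ⟨x₀, hx₀, -⟩ := hcolor i₀ hi₀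
  obtain ⟨μ, hμC, hμ⟩ := exists_corner_of_net hT ⟨x₀, hx₀⟩ hlow
  have hcolorC (x) (hx : x ∈ F) : c x ∈ C := by
    by_contra h
    have hlt := (hμ x hx (c x)).2
    rw [hμC _ h, zero_add] at hlt
    exact hlt.not_ge (hc x)
  have hCuniv : (C : Set ι) = Set.univ := hσ C ⟨i₀, hi₀⟩ fun i hi => by
    obtain ⟨x, hx, hxi⟩ := hcolor i hi
    exact hxi ▸ hcolorC x hx
  refine ⟨F, fun k => σ.apply_symm_apply k ▸ hcolor _ ?_, fun x hx y hy => ?_⟩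
  · exact mem_coe.1 (hCuniv ▸ Set.mem_univ _)
  · refine (dist_pi_lt_iff (by positivity)).2 fun i => ?_
    have hxy : |x i - y i| < Fintype.card ι * ε :=
      abs_lt.2 ⟨by linarith [hμ x hx i, hμ y hy i], by linarith [hμ x hx i, hμ y hy i]⟩
    exact hxy

theorem exists_forall_color_dist_lt [Nonempty ι] {c : stdSimplex ℝ ι → ι} {η δ : ℝ} (hη : 0 < η)
    (hc : ∀ x : stdSimplex ℝ ι, η ≤ x (c x)) (hδ : 0 < δ) :
    ∃ x, ∀ k, ∃ y, c y = k ∧ dist x y < δ := by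
  have hcard : (0 : ℝ) < Fintype.card ι := by exact_mod_cast Fintype.card_pos
  have hmul : Fintype.card ι * (min η δ / Fintype.card ι) = min η δ := mul_div_cancel₀ _ hcard.ne'
  obtain ⟨T, -, hTfin, hT⟩ := finite_cover_balls_of_compact (isCompact_univ (X := stdSimplex ℝ ι))
    (div_pos (lt_min hη hδ) hcard)
  obtain ⟨F, hF, hdist⟩ := exists_forall_color_of_net hTfin
    (fun x => by simpa using hT (Set.mem_univ x))
    (fun x => (hmul.trans_le (min_le_left η δ)).trans (hc x))
  obtain ⟨x, hx, -⟩ := hF (Classical.arbitrary ι)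
  refine ⟨x, fun k => ?_⟩
  obtain ⟨y, hy, hyk⟩ := hF k
  exact ⟨y, hyk, (hdist x hx y hy).trans_le (hmul.trans_le (min_le_right η δ))⟩

theorem isOpen_setOf_lt_stdSimplex_apply (η : ℝ) (i : ι) :
    IsOpen {x : stdSimplex ℝ ι | η < x i} :=
  isOpen_lt continuous_const ((continuous_apply i).comp continuous_subtype_val)

theorem exists_pos_forall_exists_mem_lt {G : ι → Set (stdSimplex ℝ ι)} (hG : ∀ i, IsOpen (G i))
    (hcover : ∀ x : stdSimplex ℝ ι, ∃ i, x ∈ G i ∧ 0 < x i) :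
    ∃ η > 0, ∀ x : stdSimplex ℝ ι, ∃ i, x ∈ G i ∧ η < x i := by
  let U (η : Set.Ioi (0 : ℝ)) : Set (stdSimplex ℝ ι) := ⋃ i, G i ∩ {x | η.1 < x i}
  have hU (η) : IsOpen (U η) := isOpen_iUnion fun i =>
    (hG i).inter (isOpen_setOf_lt_stdSimplex_apply η.1 i)
  have hUanti : Antitone U := fun η θ h => Set.iUnion_mono fun i =>
    Set.inter_subset_inter_right _ fun x hx => lt_of_le_of_lt (show η.1 ≤ θ.1 from h) hx
  obtain ⟨η, hη⟩ := isCompact_univ.elim_directed_cover U hU (fun x _ => by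
    obtain ⟨i, hi, hpos⟩ := hcover x
    obtain ⟨η, hη, hηx⟩ := exists_between hpos
    exact Set.mem_iUnion.2 ⟨⟨η, hη⟩, Set.mem_iUnion.2 ⟨i, hi, hηx⟩⟩) hUanti.directed_le
  exact ⟨η, η.2, fun x => Set.mem_iUnion.1 (hη (Set.mem_univ x))⟩

theorem nonempty_iInter_of_isOpen_of_forall_exists_pos [Nonempty ι]
    {G : ι → Set (stdSimplex ℝ ι)} (hG : ∀ i, IsOpen (G i))
    (hcover : ∀ x : stdSimplex ℝ ι, ∃ i, x ∈ G i ∧ 0 < x i) : (⋂ i, G i).Nonempty := by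
  obtain ⟨η, hη, hηcover⟩ := exists_pos_forall_exists_mem_lt hG hcover
  obtain ⟨δ, hδ, hball⟩ := lebesgue_number_lemma_of_metric (s := Set.univ)
    (c := fun i => G i ∩ {x | η < x i}) isCompact_univ
    (fun i => (hG i).inter (isOpen_setOf_lt_stdSimplex_apply η i))
    fun x _ => Set.mem_iUnion.2 (hηcover x)
  choose c hc using fun x => hball x (Set.mem_univ x)
  obtain ⟨x, hx⟩ := exists_forall_color_dist_lt hη
    (fun x => (hc x (Metric.mem_ball_self hδ)).2.le) hδ
  refine ⟨x, Set.mem_iInter.2 fun k => ?_⟩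
  obtain ⟨y, rfl, hxy⟩ := hx k
  exact (hc y hxy).1

end Simplex

theorem exists_simplex_point_neg_general {ι : Type*} [Fintype ι] [Nonempty ι]
    (h : (ι → ℝ) → ι → ℝ)
    (hsc : ∀ i, UpperSemicontinuousOn (fun x => h x i) (stdSimplex ℝ ι))
    (hbd : ∀ x ∈ stdSimplex ℝ ι, ∀ i, x i = 0 → 0 ≤ h x i)
    (hne : ¬ ∃ x ∈ stdSimplex ℝ ι, 0 ≤ h x) :
    ∃ v ∈ stdSimplex ℝ ι, ∀ i, h v i < 0 := by
  let G (i : ι) : Set (stdSimplex ℝ ι) := {x | h x i < 0}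
  have hG (i) : IsOpen (G i) :=
    (upperSemicontinuousOn_iff_restrict.2 (hsc i)).isOpen_preimage 0
  have hcover (x : stdSimplex ℝ ι) : ∃ i, x ∈ G i ∧ 0 < x i := by
    obtain ⟨i, hi⟩ : ∃ i, h x i < 0 := by
      by_contra! hx
      exact hne ⟨x, x.2, hx⟩
    exact ⟨i, hi, (x.2.1 i).lt_of_ne fun h0 => hi.not_ge (hbd x x.2 i h0.symm)⟩
  obtain ⟨v, hv⟩ := nonempty_iInter_of_isOpen_of_forall_exists_pos hG hcover
  exact ⟨v, v.2, fun i => Set.mem_iInter.1 hv i⟩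

/-- Let `h : ℝⁿ₊ → ℝⁿ` be continuous with `hᵢ(x) ≥ 0` whenever `x ∈ ℝⁿ₊` has `xᵢ = 0`,
and suppose there is no nonzero `x ∈ ℝⁿ₊` with `h(x) ≥ 0`.  Then there exists `v` in
the standard simplex with `h(v) ≪ 0`. -/
theorem exists_simplex_point_neg (n : ℕ) (hn : 0 < n) (h : (Fin n → ℝ) → (Fin n → ℝ))
    (hcont : ContinuousOn h {x : Fin n → ℝ | 0 ≤ x})
    (hbd : ∀ x : Fin n → ℝ, 0 ≤ x → ∀ i, x i = 0 → 0 ≤ h x i)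
    (hne : ¬ ∃ x : Fin n → ℝ, 0 ≤ x ∧ x ≠ 0 ∧ 0 ≤ h x) :
    ∃ v ∈ stdSimplex ℝ (Fin n), ∀ i, h v i < 0 := by
  have : Nonempty (Fin n) := Fin.pos_iff_nonempty.1 hn
  refine exists_simplex_point_neg_general h (fun i => ?_) (fun x hx => hbd x hx.1) ?_
  · exact ((continuousOn_pi.1 hcont i).mono fun x hx => hx.1).upperSemicontinuousOn
  · rintro ⟨x, hx, hhx⟩
    exact hne ⟨x, hx.1, fun h0 => by simpa [h0] using hx.2, hhx⟩
end

section
/- Let τ ≥ 0 and let f, g : ℝⁿ₊ → ℝⁿ be continuously differentiable (in particular, locally Lipschitz). Define F̄ᵢ(φ) = sup{fᵢ(x) + gᵢ(y) : 0 ≤ x ≤ φ(0), xᵢ = φᵢ(0), 0 ≤ y ≤ φ(−τ)} for φ ∈ C([−τ, 0], ℝⁿ₊). Then F̄ is Lipschitz on every compact subset K of C([−τ, 0], ℝⁿ₊): there exists L ≥ 0 such that ‖F̄(φ) − F̄(ψ)‖ ≤ L · sup_{t ∈ [−τ,0]} ‖φ(t) − ψ(t)‖ for all φ, ψ ∈ K.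 -/
/-!
For `0 ≤ a` the competitors `x` in the definition of `F̄ᵢ`, with `a = φ(0)`, form the order interval
`[aᵢeᵢ, a]`, while `y` ranges over `[0, φ(−τ)]`. So `F̄ᵢ(φ)` is the sum of a supremum of `fᵢ` over
one box and a supremum of `gᵢ` over another, the corners of both depending on `φ` in a
`1`-Lipschitz way. Clamping a point of `[l, u]` to `[l', u']` moves it by at most the larger of
`‖l - l'‖` and `‖u - u'‖`, so the supremum of a `C`-Lipschitz function over a box is `C`-Lipschitz
in the corners of the box.
-/

open Set
open scoped NNReal Pointwise

theorem sSup_image_le_sSup_image_add {α : Type*} [PseudoMetricSpace α] {h : α → ℝ} {C : ℝ≥0}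
    {s A B : Set α} {d : ℝ} (hh : LipschitzOnWith C h s) (hAs : A ⊆ s) (hBs : B ⊆ s)
    (hA : A.Nonempty) (hB : BddAbove (h '' B)) (hAB : ∀ x ∈ A, ∃ y ∈ B, dist x y ≤ d) :
    sSup (h '' A) ≤ sSup (h '' B) + C * d := by
  refine csSup_le (hA.image h) ?_
  rintro _ ⟨x, hx, rfl⟩
  obtain ⟨y, hy, hxy⟩ := hAB x hx
  calc h x ≤ h y + C * dist x y := hh.le_add_mul (hAs hx) (hBs hy)
    _ ≤ sSup (h '' B) + C * d := by
      gcongr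
      exact le_csSup hB (mem_image_of_mem h hy)

theorem mem_Icc_single_self_iff {ι : Type*} [DecidableEq ι] {β : ι → Type*} [∀ i, Zero (β i)]
    [∀ i, PartialOrder (β i)] {a : ∀ i, β i} {i : ι} (ha : 0 ≤ a i) {x : ∀ i, β i} :
    x ∈ Icc (Pi.single i (a i)) a ↔ 0 ≤ x ∧ x ≤ a ∧ x i = a i := by
  rw [mem_Icc, Pi.single, update_le_iff]
  constructor
  · rintro ⟨⟨hi, hne⟩, hxa⟩
    refine ⟨fun j => ?_, hxa, (hxa i).antisymm hi⟩
    obtain rfl | hj := eq_or_ne j i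
    exacts [ha.trans hi, hne j hj]
  · rintro ⟨hx, hxa, hi⟩
    exact ⟨⟨hi.ge, fun j _ => hx j⟩, hxa⟩

section Box

variable {ι : Type*} [Fintype ι]

theorem lipschitzWith_clamp (x : ι → ℝ) :
    LipschitzWith 1 fun p : (ι → ℝ) × (ι → ℝ) => p.1 ⊔ x ⊓ p.2 := by
  refine LipschitzWith.mk_one fun p q => (dist_pi_le_iff dist_nonneg).2 fun j => ?_
  have hfst : LipschitzWith 1 fun p : (ι → ℝ) × (ι → ℝ) => p.1 j := by
    simpa using! (LipschitzWith.eval j).comp LipschitzWith.prod_fst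
  have hsnd : LipschitzWith 1 fun p : (ι → ℝ) × (ι → ℝ) => p.2 j := by
    simpa using! (LipschitzWith.eval j).comp LipschitzWith.prod_snd
  simpa using! (hfst.max (hsnd.const_min (x j))).dist_le_mul p q

theorem exists_mem_Icc_dist_le {l u l' u' x : ι → ℝ} (hx : x ∈ Icc l u) (h' : l' ≤ u') :
    ∃ y ∈ Icc l' u', dist x y ≤ dist (l, u) (l', u') := by
  refine ⟨l' ⊔ x ⊓ u', ⟨le_sup_left, sup_le h' inf_le_right⟩, ?_⟩
  have hclamp : l ⊔ x ⊓ u = x := by rw [inf_eq_left.2 hx.2, sup_eq_right.2 hx.1]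
  simpa [hclamp] using (lipschitzWith_clamp x).dist_le_mul (l, u) (l', u')

theorem lipschitzOnWith_sSup_image_Icc {h : (ι → ℝ) → ℝ} {C : ℝ≥0} {m M : ι → ℝ}
    (hh : LipschitzOnWith C h (Icc m M)) :
    LipschitzOnWith C (fun p : (ι → ℝ) × (ι → ℝ) => sSup (h '' Icc p.1 p.2))
      {p | m ≤ p.1 ∧ p.1 ≤ p.2 ∧ p.2 ≤ M} := by
  refine LipschitzOnWith.of_le_add_mul C ?_
  rintro p ⟨hmp, hp, hpM⟩ q ⟨hmq, hq, hqM⟩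
  have hbdd : BddAbove (h '' Icc q.1 q.2) :=
    (isCompact_Icc.bddAbove_image hh.continuousOn).mono (image_mono (Icc_subset_Icc hmq hqM))
  exact sSup_image_le_sSup_image_add hh (Icc_subset_Icc hmp hpM) (Icc_subset_Icc hmq hqM)
    (nonempty_Icc.2 hp) hbdd fun x hx => exists_mem_Icc_dist_le hx hq

theorem lipschitzWith_single_self [DecidableEq ι] {G : ι → Type*}
    [∀ i, NormedAddCommGroup (G i)] (i : ι) :
    LipschitzWith 1 fun a : ∀ j, G j => (Pi.single i (a i) : ∀ j, G j) :=
  LipschitzWith.mk_one fun a b => by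
    rw [dist_eq_norm, ← Pi.single_sub, Pi.norm_single, ← dist_eq_norm]
    exact dist_le_pi_dist a b i

theorem lipschitzOnWith_sSup_image_Icc_single [DecidableEq ι] {h : (ι → ℝ) → ℝ} {C : ℝ≥0}
    {M : ι → ℝ} (hh : LipschitzOnWith C h (Icc 0 M)) (i : ι) :
    LipschitzOnWith C (fun a => sSup (h '' Icc (Pi.single i (a i)) a)) (Icc 0 M) := by
  have hcorners := ((lipschitzWith_single_self i).prodMk LipschitzWith.id).lipschitzOnWith
    (s := Icc 0 M)
  simpa using! (lipschitzOnWith_sSup_image_Icc hh).comp hcorners fun a ha =>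
    ⟨Pi.single_nonneg.2 (ha.1 i), ((mem_Icc_single_self_iff (ha.1 i)).2 ⟨ha.1, le_rfl, rfl⟩).1,
      ha.2⟩

theorem lipschitzOnWith_sSup_image_Icc_right {h : (ι → ℝ) → ℝ} {C : ℝ≥0} {m M : ι → ℝ}
    (hh : LipschitzOnWith C h (Icc m M)) :
    LipschitzOnWith C (fun b => sSup (h '' Icc m b)) (Icc m M) := by
  have hcorners := ((LipschitzWith.const m).prodMk LipschitzWith.id).lipschitzOnWith
    (s := Icc m M)
  simpa using! (lipschitzOnWith_sSup_image_Icc hh).comp hcorners fun b hb => ⟨le_rfl, hb⟩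

end Box

/-- The functional `F̄` as a function of the pair `p = (φ(0), φ(−τ))` of values on which it
depends. -/
noncomputable def endpointSup {ι : Type*} (f g : (ι → ℝ) → ι → ℝ) (p : (ι → ℝ) × (ι → ℝ)) (i : ι) :
    ℝ :=
  sSup {r : ℝ | ∃ x y : ι → ℝ,
    0 ≤ x ∧ x ≤ p.1 ∧ x i = p.1 i ∧ 0 ≤ y ∧ y ≤ p.2 ∧ r = f x i + g y i}

section EndpointSup

variable {ι : Type*} {f g : (ι → ℝ) → ι → ℝ}

theorem endpointSup_eq_sSup_add_sSup [DecidableEq ι] {p : (ι → ℝ) × (ι → ℝ)} {i : ι}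
    (ha : 0 ≤ p.1) (hb : 0 ≤ p.2)
    (hf : BddAbove ((f · i) '' Icc 0 p.1)) (hg : BddAbove ((g · i) '' Icc 0 p.2)) :
    endpointSup f g p i =
      sSup ((f · i) '' Icc (Pi.single i (p.1 i)) p.1) + sSup ((g · i) '' Icc 0 p.2) := by
  have hsingle : 0 ≤ (Pi.single i (p.1 i) : ι → ℝ) := Pi.single_nonneg.2 (ha i)
  have hmem (x : ι → ℝ) : x ∈ Icc (Pi.single i (p.1 i)) p.1 ↔ 0 ≤ x ∧ x ≤ p.1 ∧ x i = p.1 i :=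
    mem_Icc_single_self_iff (a := p.1) (ha i)
  have hface : (Icc (Pi.single i (p.1 i)) p.1).Nonempty := ⟨p.1, (hmem p.1).2 ⟨ha, le_rfl, rfl⟩⟩
  rw [← csSup_add (hface.image _) (hf.mono (image_mono (Icc_subset_Icc_left hsingle)))
    ((nonempty_Icc.2 hb).image _) hg, endpointSup]
  congr 1
  ext r
  constructor
  · rintro ⟨x, y, hx, hxa, hxi, hy, hyb, rfl⟩
    exact add_mem_add (mem_image_of_mem _ ((hmem x).2 ⟨hx, hxa, hxi⟩))
      (mem_image_of_mem _ ⟨hy, hyb⟩)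
  · rintro ⟨_, ⟨x, hx, rfl⟩, _, ⟨y, ⟨hy, hyb⟩, rfl⟩, rfl⟩
    obtain ⟨hx, hxa, hxi⟩ := (hmem x).1 hx
    exact ⟨x, y, hx, hxa, hxi, hy, hyb, rfl⟩

variable [Fintype ι]

theorem lipschitzOnWith_endpointSup {Cf Cg : ℝ≥0} {M N : ι → ℝ}
    (hf : LipschitzOnWith Cf f (Icc 0 M)) (hg : LipschitzOnWith Cg g (Icc 0 N)) :
    LipschitzOnWith (Cf + Cg) (endpointSup f g) (Icc 0 M ×ˢ Icc 0 N) := by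
  classical
  refine LipschitzOnWith.of_dist_le_mul fun p hp q hq =>
    (dist_pi_le_iff (by positivity)).2 fun i => ?_
  have hfi : LipschitzOnWith Cf (f · i) (Icc 0 M) := by
    simpa using! (LipschitzWith.eval i).comp_lipschitzOnWith hf
  have hgi : LipschitzOnWith Cg (g · i) (Icc 0 N) := by
    simpa using! (LipschitzWith.eval i).comp_lipschitzOnWith hg
  have hF : LipschitzOnWith Cf (fun p : (ι → ℝ) × (ι → ℝ) =>
      sSup ((f · i) '' Icc (Pi.single i (p.1 i)) p.1)) (Icc 0 M ×ˢ Icc 0 N) := by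
    simpa only [mul_one] using! (lipschitzOnWith_sSup_image_Icc_single hfi i).comp
      (LipschitzWith.prod_fst.lipschitzOnWith (s := Icc 0 M ×ˢ Icc 0 N)) mapsTo_fst_prod
  have hG : LipschitzOnWith Cg (fun p : (ι → ℝ) × (ι → ℝ) =>
      sSup ((g · i) '' Icc 0 p.2)) (Icc 0 M ×ˢ Icc 0 N) := by
    simpa only [mul_one] using! (lipschitzOnWith_sSup_image_Icc_right hgi).comp
      (LipschitzWith.prod_snd.lipschitzOnWith (s := Icc 0 M ×ˢ Icc 0 N)) mapsTo_snd_prod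
  have hsum : ∀ p ∈ Icc 0 M ×ˢ Icc 0 N, endpointSup f g p i =
      sSup ((f · i) '' Icc (Pi.single i (p.1 i)) p.1) + sSup ((g · i) '' Icc 0 p.2) := fun p hp =>
    endpointSup_eq_sSup_add_sSup hp.1.1 hp.2.1
      ((isCompact_Icc.bddAbove_image hfi.continuousOn).mono
        (image_mono (Icc_subset_Icc_right hp.1.2)))
      ((isCompact_Icc.bddAbove_image hgi.continuousOn).mono
        (image_mono (Icc_subset_Icc_right hp.2.2)))
  rw [hsum p hp, hsum q hq]
  exact (hF.add hG).dist_le_mul p hp q hq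

end EndpointSup

theorem Fbar_lipschitz_on_compacts_general {ι X : Type*} [Fintype ι] [TopologicalSpace X]
    [CompactSpace X] {f g : (ι → ℝ) → ι → ℝ} (hf : LocallyLipschitzOn (Ici 0) f)
    (hg : LocallyLipschitzOn (Ici 0) g) (s t : X) {K : Set C(X, ι → ℝ)}
    (hK : Bornology.IsBounded K) (hKs : ∀ φ ∈ K, 0 ≤ φ s) (hKt : ∀ φ ∈ K, 0 ≤ φ t) :
    ∃ C, LipschitzOnWith C (fun φ => endpointSup f g (φ s, φ t)) K := by
  have heval (r : X) : LipschitzWith 1 fun φ : C(X, ι → ℝ) => φ r :=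
    LipschitzWith.mk_one fun φ ψ => ContinuousMap.dist_apply_le_dist r
  obtain ⟨M, hM⟩ := ((heval s).isBounded_image hK).bddAbove
  obtain ⟨N, hN⟩ := ((heval t).isBounded_image hK).bddAbove
  obtain ⟨Cf, hCf⟩ := (hf.mono Icc_subset_Ici_self).exists_lipschitzOnWith_of_compact
    (isCompact_Icc (a := 0) (b := M))
  obtain ⟨Cg, hCg⟩ := (hg.mono Icc_subset_Ici_self).exists_lipschitzOnWith_of_compact
    (isCompact_Icc (a := 0) (b := N))
  have hmaps : MapsTo (fun φ : C(X, ι → ℝ) => (φ s, φ t)) K (Icc 0 M ×ˢ Icc 0 N) := fun φ hφ =>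
    ⟨⟨hKs φ hφ, hM (mem_image_of_mem _ hφ)⟩, ⟨hKt φ hφ, hN (mem_image_of_mem _ hφ)⟩⟩
  exact ⟨_, (lipschitzOnWith_endpointSup hCf hCg).comp
    ((heval s).prodMk (heval t)).lipschitzOnWith hmaps⟩

/-- If `f, g` are `C¹` on the nonnegative orthant, the functional
`F̄ᵢ(φ) = sup{fᵢ(x)+gᵢ(y) : 0 ≤ x ≤ φ(0), xᵢ = φᵢ(0), 0 ≤ y ≤ φ(−τ)}` is Lipschitz on
every compact subset `K` of `C([−τ,0], ℝⁿ₊)` with respect to the supremum norm. -/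
theorem Fbar_lipschitz_on_compacts (n : ℕ) (τ : ℝ) (hτ : 0 ≤ τ)
    (f g : (Fin n → ℝ) → (Fin n → ℝ))
    (hf : ContDiffOn ℝ 1 f {x : Fin n → ℝ | 0 ≤ x})
    (hg : ContDiffOn ℝ 1 g {x : Fin n → ℝ | 0 ≤ x})
    (Fbar : C(Set.Icc (-τ) 0, Fin n → ℝ) → (Fin n → ℝ))
    (hFbar : ∀ φ : C(Set.Icc (-τ) 0, Fin n → ℝ), ∀ i : Fin n,
      Fbar φ i = sSup {r : ℝ | ∃ x y : Fin n → ℝ,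
        0 ≤ x ∧ x ≤ φ ⟨0, Set.mem_Icc.mpr ⟨neg_nonpos.mpr hτ, le_rfl⟩⟩ ∧
        x i = φ ⟨0, Set.mem_Icc.mpr ⟨neg_nonpos.mpr hτ, le_rfl⟩⟩ i ∧
        0 ≤ y ∧ y ≤ φ ⟨-τ, Set.mem_Icc.mpr ⟨le_rfl, neg_nonpos.mpr hτ⟩⟩ ∧
        r = f x i + g y i})
    (K : Set C(Set.Icc (-τ) 0, Fin n → ℝ)) (hK : IsCompact K)
    (hKpos : ∀ φ ∈ K, ∀ t : Set.Icc (-τ) 0, 0 ≤ φ t) :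
    ∃ L : ℝ, 0 ≤ L ∧ ∀ φ ∈ K, ∀ ψ ∈ K, ‖Fbar φ - Fbar ψ‖ ≤ L * ‖φ - ψ‖ := by
  obtain ⟨C, hC⟩ := Fbar_lipschitz_on_compacts_general
    (hf.locallyLipschitzOn (convex_Ici 0)) (hg.locallyLipschitzOn (convex_Ici 0)) _ _
    hK.isBounded (fun φ hφ => hKpos φ hφ _) (fun φ hφ => hKpos φ hφ _)
  obtain rfl : Fbar = _ := funext₂ hFbar
  exact ⟨C, C.2, fun φ hφ ψ hψ => hC.norm_sub_le hφ hψ⟩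
end

section
/- Let f, g : ℝⁿ₊ → ℝⁿ be continuous and subhomogeneous of degree α > 0, and define h : ℝⁿ₊ → ℝⁿ by hᵢ(w) = sup{fᵢ(x) + gᵢ(y) : 0 ≤ x ≤ w, xᵢ = wᵢ, 0 ≤ y ≤ w}. Then h is subhomogeneous of degree α: h(λw) ≤ λ^α h(w) for all λ ≥ 1 and all w ∈ ℝⁿ₊. -/
/-! The pairs `(x, y)` admissible in the supremum for `hᵢ(c • w)` are exactly the `c`-multiples of
those admissible for `hᵢ(w)`, and `(x, y) ↦ fᵢ(x) + gᵢ(y)` is subhomogeneous, so each competing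
value grows by a factor at most `c ^ α`. On the compact box `[0, w]` the continuous maps `f` and `g`
are bounded, which makes the real supremum defining `hᵢ(w)` a genuine least upper bound. -/

open Set
open scoped Pointwise

section Subhomogeneous

variable {E E' F : Type*} {α : ℝ}

/-- Subhomogeneity of degree `α` of a map on a set `s`: stretching a point of `s` by `c ≥ 1`
multiplies the value by at most `c ^ α`. The stretched point itself need not lie in `s`. -/
def SubhomogeneousOn [SMul ℝ E] [SMul ℝ F] [LE F] (α : ℝ) (f : E → F) (s : Set E) : Prop :=
  ∀ ⦃c : ℝ⦄, 1 ≤ c → ∀ ⦃x : E⦄, x ∈ s → f (c • x) ≤ c ^ α • f x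

namespace SubhomogeneousOn

theorem mono [SMul ℝ E] [SMul ℝ F] [LE F] {f : E → F} {s t : Set E}
    (hf : SubhomogeneousOn α f t) (hst : s ⊆ t) : SubhomogeneousOn α f s :=
  fun _ hc _ hx ↦ hf hc (hst hx)

theorem eval [SMul ℝ E] {ι : Type*} {G : ι → Type*} [∀ i, SMul ℝ (G i)] [∀ i, LE (G i)]
    {f : E → ∀ i, G i} {s : Set E} (hf : SubhomogeneousOn α f s) (i : ι) :
    SubhomogeneousOn α (fun x ↦ f x i) s :=
  fun _ hc _ hx ↦ hf hc hx i

theorem add_prod [SMul ℝ E] [SMul ℝ E'] [AddCommMonoid F] [PartialOrder F]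
    [IsOrderedAddMonoid F] [DistribSMul ℝ F] {f : E → F} {g : E' → F} {s : Set E} {t : Set E'}
    (hf : SubhomogeneousOn α f s) (hg : SubhomogeneousOn α g t) :
    SubhomogeneousOn α (fun p : E × E' ↦ f p.1 + g p.2) (s ×ˢ t) := fun c hc p hp ↦
  calc f (c • p.1) + g (c • p.2)
      ≤ c ^ α • f p.1 + c ^ α • g p.2 := add_le_add (hf hc hp.1) (hg hc hp.2)
    _ = c ^ α • (f p.1 + g p.2) := (smul_add _ _ _).symm

theorem csSup_image_smul_le [SMul ℝ E] {φ : E → ℝ} {s : Set E} (hφ : SubhomogeneousOn α φ s)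
    (hs : s.Nonempty) (hbdd : BddAbove (φ '' s)) {c : ℝ} (hc : 1 ≤ c) :
    sSup (φ '' (c • s)) ≤ c ^ α * sSup (φ '' s) := by
  refine csSup_le (hs.smul_set.image φ) ?_
  rintro _ ⟨_, ⟨x, hx, rfl⟩, rfl⟩
  have hle : φ x ≤ sSup (φ '' s) := le_csSup hbdd (mem_image_of_mem φ hx)
  calc φ (c • x) ≤ c ^ α * φ x := hφ hc hx
    _ ≤ c ^ α * sSup (φ '' s) := by gcongr

end SubhomogeneousOn

end Subhomogeneous

theorem bddAbove_image_add_prod {X Y M : Type*} [Add M] [Preorder M] [AddLeftMono M]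
    [AddRightMono M] {f : X → M} {g : Y → M} {s : Set X} {t : Set Y}
    (hf : BddAbove (f '' s)) (hg : BddAbove (g '' t)) :
    BddAbove ((fun p : X × Y ↦ f p.1 + g p.2) '' (s ×ˢ t)) := by
  obtain ⟨a, ha⟩ := hf
  obtain ⟨b, hb⟩ := hg
  refine ⟨a + b, ?_⟩
  rintro _ ⟨p, hp, rfl⟩
  exact add_le_add (ha (mem_image_of_mem f hp.1)) (hb (mem_image_of_mem g hp.2))

theorem bddAbove_image_Icc_of_continuousOn_Ici {E κ : Type*} [TopologicalSpace E] [Preorder E]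
    [CompactIccSpace E] {f : E → κ → ℝ} {a : E} (hf : ContinuousOn f (Ici a)) (b : E) :
    BddAbove (f '' Icc a b) := by
  refine bddAbove_pi.2 fun i ↦ ?_
  rw [image_image]
  exact isCompact_Icc.bddAbove_image ((continuousOn_pi.1 hf i).mono Icc_subset_Ici_self)

theorem smul_Icc_of_pos {G₀ E : Type*} [GroupWithZero G₀] [Preorder G₀] [Preorder E]
    [MulAction G₀ E] [PosSMulMono G₀ E] [PosSMulReflectLE G₀ E] {c : G₀} (hc : 0 < c) (a b : E) :
    c • Icc a b = Icc (c • a) (c • b) := by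
  ext x
  rw [mem_smul_set_iff_inv_smul_mem₀ hc.ne', mem_Icc, mem_Icc, le_inv_smul_iff_of_pos hc,
    inv_smul_le_iff_of_pos hc]

section CoupledSup

variable {ι : Type*}

/-- The face `{x : 0 ≤ x ≤ w, xᵢ = wᵢ}` of the box `[0, w]`, over which the first argument ranges
in the supremum defining `hᵢ(w)`. -/
def upperFace (w : ι → ℝ) (i : ι) : Set (ι → ℝ) :=
  {x ∈ Icc 0 w | x i = w i}

theorem upperFace_subset_Icc (w : ι → ℝ) (i : ι) : upperFace w i ⊆ Icc 0 w :=
  sep_subset _ _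

theorem self_mem_upperFace {w : ι → ℝ} (hw : 0 ≤ w) (i : ι) : w ∈ upperFace w i :=
  ⟨right_mem_Icc.2 hw, rfl⟩

theorem smul_upperFace {c : ℝ} (hc : 0 < c) (w : ι → ℝ) (i : ι) :
    c • upperFace w i = upperFace (c • w) i := by
  ext x
  have hbox : c⁻¹ • x ∈ Icc 0 w ↔ x ∈ Icc 0 (c • w) := by
    rw [← mem_smul_set_iff_inv_smul_mem₀ hc.ne', smul_Icc_of_pos hc, smul_zero]
  have hcoord : (c⁻¹ • x) i = w i ↔ x i = (c • w) i := inv_smul_eq_iff₀ hc.ne'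
  rw [mem_smul_set_iff_inv_smul_mem₀ hc.ne']
  exact and_congr hbox hcoord

/-- The map `h` of the theorem:
`hᵢ(w) = sup {fᵢ(x) + gᵢ(y) : 0 ≤ x ≤ w, xᵢ = wᵢ, 0 ≤ y ≤ w}`. The supremum is taken in `ℝ`, so it
is `0` by convention when the set is empty or unbounded above. -/
noncomputable def coupledSup (f g : (ι → ℝ) → (ι → ℝ)) (w : ι → ℝ) (i : ι) : ℝ :=
  sSup {r : ℝ | ∃ x y : ι → ℝ, 0 ≤ x ∧ x ≤ w ∧ x i = w i ∧ 0 ≤ y ∧ y ≤ w ∧ r = f x i + g y i}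

theorem coupledSup_eq_sSup_image (f g : (ι → ℝ) → (ι → ℝ)) (w : ι → ℝ) (i : ι) :
    coupledSup f g w i =
      sSup ((fun p : (ι → ℝ) × (ι → ℝ) ↦ f p.1 i + g p.2 i) '' (upperFace w i ×ˢ Icc 0 w)) := by
  unfold coupledSup
  congr 1
  ext r
  simp only [upperFace, mem_ofPred_eq, mem_image, mem_prod, mem_Icc, Prod.exists, and_assoc,
    eq_comm (a := r)]

theorem h_subhomogeneous_general {α : ℝ} {f g : (ι → ℝ) → (ι → ℝ)}
    (hf : ∀ w, BddAbove (f '' Icc 0 w)) (hg : ∀ w, BddAbove (g '' Icc 0 w))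
    (hfsub : SubhomogeneousOn α f (Ici 0)) (hgsub : SubhomogeneousOn α g (Ici 0)) :
    SubhomogeneousOn α (coupledSup f g) (Ici 0) := by
  intro c hc w hw i
  have hc₀ : 0 < c := zero_lt_one.trans_le hc
  let φ : (ι → ℝ) × (ι → ℝ) → ℝ := fun p ↦ f p.1 i + g p.2 i
  let S : Set ((ι → ℝ) × (ι → ℝ)) := upperFace w i ×ˢ Icc 0 w
  have hS : S ⊆ Icc 0 w ×ˢ Icc 0 w := prod_mono_left (upperFace_subset_Icc w i)
  have hφ : SubhomogeneousOn α φ S :=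
    ((hfsub.eval i).add_prod (hgsub.eval i)).mono
      (hS.trans (prod_mono Icc_subset_Ici_self Icc_subset_Ici_self))
  have hne : S.Nonempty := ⟨(w, w), self_mem_upperFace hw i, right_mem_Icc.2 hw⟩
  have coord_bdd {k : (ι → ℝ) → (ι → ℝ)} (hk : ∀ w, BddAbove (k '' Icc 0 w)) :
      BddAbove ((fun x ↦ k x i) '' Icc 0 w) := by
    simpa only [image_image, Function.eval] using bddAbove_pi.1 (hk w) i
  have hbdd : BddAbove (φ '' S) :=
    (bddAbove_image_add_prod (coord_bdd hf) (coord_bdd hg)).mono (image_mono hS)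
  have hsmul : c • S = upperFace (c • w) i ×ˢ Icc 0 (c • w) := by
    rw [smul_set_prod, smul_upperFace hc₀, smul_Icc_of_pos hc₀, smul_zero]
  calc coupledSup f g (c • w) i
      = sSup (φ '' (c • S)) := by rw [coupledSup_eq_sSup_image, hsmul]
    _ ≤ c ^ α * sSup (φ '' S) := hφ.csSup_image_smul_le hne hbdd hc
    _ = (c ^ α • coupledSup f g w) i := by
      rw [Pi.smul_apply, smul_eq_mul, coupledSup_eq_sSup_image]

end CoupledSup

/-- If `f, g` are continuous and subhomogeneous of degree `α > 0` on the nonnegative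
orthant, then `h` defined by `hᵢ(w) = sup{fᵢ(x)+gᵢ(y) : 0 ≤ x ≤ w, xᵢ = wᵢ, 0 ≤ y ≤ w}`
is also subhomogeneous of degree `α`: `h(λw) ≤ λ^α h(w)` for all `λ ≥ 1`, `w ∈ ℝⁿ₊`. -/
theorem h_subhomogeneous (n : ℕ) (α : ℝ) (hα : 0 < α)
    (f g : (Fin n → ℝ) → (Fin n → ℝ))
    (hf : ContinuousOn f {x : Fin n → ℝ | 0 ≤ x})
    (hg : ContinuousOn g {x : Fin n → ℝ | 0 ≤ x})
    (hfsub : ∀ lam : ℝ, 1 ≤ lam → ∀ x : Fin n → ℝ, 0 ≤ x →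
      f (lam • x) ≤ (lam ^ α) • f x)
    (hgsub : ∀ lam : ℝ, 1 ≤ lam → ∀ x : Fin n → ℝ, 0 ≤ x →
      g (lam • x) ≤ (lam ^ α) • g x) :
    ∀ lam : ℝ, 1 ≤ lam → ∀ w : Fin n → ℝ, 0 ≤ w → ∀ i : Fin n,
      sSup {r : ℝ | ∃ x y : Fin n → ℝ, 0 ≤ x ∧ x ≤ lam • w ∧ x i = (lam • w) i ∧
          0 ≤ y ∧ y ≤ lam • w ∧ r = f x i + g y i} ≤
      (lam ^ α) * sSup {r : ℝ | ∃ x y : Fin n → ℝ, 0 ≤ x ∧ x ≤ w ∧ x i = w i ∧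
          0 ≤ y ∧ y ≤ w ∧ r = f x i + g y i} := fun _ hlam _ hw i ↦
  h_subhomogeneous_general (bddAbove_image_Icc_of_continuousOn_Ici hf)
    (bddAbove_image_Icc_of_continuousOn_Ici hg) hfsub hgsub hlam hw i
end
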